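/- Let G=W(Γ,o). The subgroup Aut★G of Aut G, consisting of all automorphisms θ such that for every maximal complete subgraph (clique) Δ of Γ the subgroup θ(⟨Δ⟩) is conjugate in G to ⟨Θ⟩ for some maximal complete subgraph Θ of Γ, is generated by the set 𝒢★ consisting of all labeled graph automorphisms, all factor automorphisms, all ★-transvections (well-defined dominated transvections τ_{x,y}^q with x adjacent to y), and all partial conjugations. -/

import Mathlib

/-!
That the elements of `𝒢★` map maximal clique subgroups to conjugates of such subgroups is checked
directly (`autStar_of_mem_closure`). For the converse, an automorphism `θ` in `Aut★ G` is reduced to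
the identity in three stages.

*Graph automorphisms.* On the abelianization `⊕ ℤ/o(v)` the map `θ` has an invertible matrix with
entries `coord y (θ v)`. Restricting to the vertices of one order `n` and reducing modulo a prime
factor of `n` keeps it invertible, so a nonzero term of the determinant gives an order-preserving
permutation `γ` of the vertices such that `γ v` occurs in `θ v` (`exists_fiber_perm`). If `⟨Δ⟩` is
mapped to a conjugate of `⟨Θ⟩`, then `γ Δ ⊆ Θ`; hence `γ` is a labelled graph automorphism and
`Θ = γ Δ`. After composing with its inverse, `θ` maps each maximal clique subgroup to a conjugate of
itself (`AutStar.mem_closure`).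

*Transvections and factor automorphisms.* Now `coord y (θ v) ≠ 0` implies `v★ ⊆ y★`, and a Gaussian
elimination on the matrix of `θ`, in which all row operations are realized by ★-transvections and
factor automorphisms, makes `θ` trivial on the abelianization (`Good.exists_elim`). Since clique
subgroups embed in the abelianization, `θ` then acts on every maximal clique as a conjugation, in
particular on every edge (`FixCliques.edgeConj`).

*Partial conjugations.* Let `θ v = P_v⁻¹ v P_v` with `P_v` as short as possible. Each vertex `v` has a
wall in `G`, whose sectors are the fibres of the initial exponent `ini v`, and any two translates
of such walls cross, coincide, or are nested (`cross_or_nest`). For `v ∉ u★` the image walls of `u`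
and `v` are nested; the sector of the wall of `u` in which the wall of `v` lies is given by
`ini u (P_u P_v⁻¹)` and depends only on the component of `v` in `Γ∖u★` (`ini_const`). If it is nonzero,
a partial conjugation shortens all `P_z` with `z` in this component. If it always vanishes, a ping-pong
argument shows that `θ` is the identity (`eq_one_of_no_sep`), so that an induction on the sum of the
lengths of the `P_v` finishes the proof (`EdgeConj.mem_closure`).

Normal forms for `G`, and with them `ini`, come from the action of `G` on pilings.
-/

/- Graph products of cyclic groups W(Γ,o), following Corredor–Gutierrez.
   A label `o v = 0` means the vertex group is infinite cyclic; otherwise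
   `o v` is a prime power > 1 and the vertex group is cyclic of order `o v`. -/

namespace GP

variable {V : Type}

/-- Relations of the graph product of cyclic groups determined by `(Γ, o)`. -/
def rels (Γ : SimpleGraph V) (o : V → ℕ) : Set (FreeGroup V) :=
  {r | (∃ v : V, o v ≠ 0 ∧ r = FreeGroup.of v ^ (o v)) ∨
    (∃ x y : V, Γ.Adj x y ∧
      r = FreeGroup.of x * FreeGroup.of y * (FreeGroup.of x)⁻¹ * (FreeGroup.of y)⁻¹)}

/-- The graph product `W(Γ,o)`. -/
abbrev W (Γ : SimpleGraph V) (o : V → ℕ) : Type := PresentedGroup (rels Γ o)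

/-- `o` labels each vertex with a prime power `> 1` or `0` (standing for `∞`). -/
def IsLabeling (o : V → ℕ) : Prop := ∀ v, o v = 0 ∨ IsPrimePow (o v)

variable (Γ : SimpleGraph V) (o : V → ℕ)

/-- The generator of `W(Γ,o)` corresponding to a vertex. -/
def gen (v : V) : W Γ o := PresentedGroup.of v

/-- Evaluation of a word `v₁^{n₁} ⋯ v_p^{n_p}` in the group. -/
def evalWord (l : List (V × ℤ)) : W Γ o := (l.map fun p => gen Γ o p.1 ^ p.2).prod

/-- The length `Σ |n_i|` of a word. -/
def wordLen (l : List (V × ℤ)) : ℕ := (l.map fun p => p.2.natAbs).sum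

/-- The length of a group element: the minimal length of a word representing it. -/
noncomputable def len (g : W Γ o) : ℕ := sInf (wordLen '' {l | evalWord Γ o l = g})

/-- `l` is a reduced word for `g`: it represents `g` and has minimal length. -/
def IsReducedWord (l : List (V × ℤ)) (g : W Γ o) : Prop :=
  evalWord Γ o l = g ∧ ∀ l' : List (V × ℤ), evalWord Γ o l' = g → wordLen l ≤ wordLen l'

/-- The support of `g`: the vertices occurring in a reduced word for `g`. -/
def supp (g : W Γ o) : Set V :=
  {v | ∃ l, IsReducedWord Γ o l g ∧ v ∈ l.map Prod.fst}

/-- `g` is cyclically reduced. -/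
def IsCR (g : W Γ o) : Prop :=
  ∀ v : V, supp Γ o g ⊆ supp Γ o (gen Γ o v * g * (gen Γ o v)⁻¹) ∧
    supp Γ o g ⊆ supp Γ o ((gen Γ o v)⁻¹ * g * gen Γ o v)

/-- The cyclic support of `g`: the support of the cyclically reduced part of `g`. -/
def csupp (g : W Γ o) : Set V :=
  {x | ∃ w u : W Γ o, g = w * u * w⁻¹ ∧ IsCR Γ o u ∧ x ∈ supp Γ o u}

/-- The star `v★ = {v} ∪ lk v` of a vertex. -/
def vstar (v : V) : Set V := insert v (Γ.neighborSet v)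

/-- The domination order: `x ≤ y` iff `lk x ⊆ y★`. -/
def vle (x y : V) : Prop := Γ.neighborSet x ⊆ vstar Γ y

/-- Strong domination: `x ≤ₛ y` iff `x★ ⊆ y★`. -/
def vles (x y : V) : Prop := vstar Γ x ⊆ vstar Γ y

/-- The `∼`-class `[v]` of a vertex. -/
def simClass (v : V) : Set V := {x | vle Γ v x ∧ vle Γ x v}

/-- The `∼ₛ`-class `[v]ₛ` of a vertex. -/
def sClass (v : V) : Set V := {x | vles Γ v x ∧ vles Γ x v}

/-- The vertex set of `Γ_v`, the full subgraph on the vertices dominating `v`. -/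
def GammaSet (v : V) : Set V := {x | vle Γ v x}

/-- The link of a set of vertices: `⋂_{s ∈ S} lk s`. -/
def lkSet (S : Set V) : Set V := {x | ∀ s ∈ S, Γ.Adj s x}

/-- `K` is (the vertex set of) a connected component of the full subgraph of `Λ` on `s`. -/
def IsCompOf (Λ : SimpleGraph V) (s K : Set V) : Prop :=
  ∃ c : (SimpleGraph.induce s Λ).ConnectedComponent, K = Subtype.val '' c.supp

/-- The subgroup `⟨S⟩` generated by a set of vertices. -/
def genSubgroup (S : Set V) : Subgroup (W Γ o) := Subgroup.closure (gen Γ o '' S)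

/-- `r` is a root of `g`: `g = r^n` with `n ≥ 1` maximal (and `n < o(g)` when
`g` has finite order). -/
def IsRootOf (r g : W Γ o) : Prop :=
  ∃ n : ℕ, 1 ≤ n ∧ g = r ^ n ∧
    (orderOf g = 0 → ∀ (r' : W Γ o) (m : ℕ), 1 ≤ m → g = r' ^ m → m ≤ n) ∧
    (orderOf g ≠ 0 → n < orderOf g ∧
      ∀ (r' : W Γ o) (m : ℕ), 1 ≤ m → m < orderOf g → g = r' ^ m → m ≤ n)

/-- The rank of `g`: the number of vertices of the labeled graph `K(u)`, i.e. the
number of connected components of `⟨csupp g⟩ᶜ` plus `|lk (csupp g)|`. -/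
noncomputable def rk (g : W Γ o) : ℕ :=
  Nat.card ((SimpleGraph.induce (csupp Γ o g) Γᶜ).ConnectedComponent) +
    (lkSet Γ (csupp Γ o g)).ncard

/-- `u = z₁^{m₁} ⋯ z_s^{m_s}` is a basic form of the cyclically reduced element `u`:
a commuting product of powers of roots whose supports are the connected components of
`⟨supp u⟩ᶜ`. -/
def IsBasicForm (u : W Γ o) (s : ℕ) (z : Fin s → W Γ o) (m : Fin s → ℕ) : Prop :=
  IsCR Γ o u ∧
  (∀ i j, Commute (z i) (z j)) ∧
  u = (List.ofFn fun i => z i ^ m i).prod ∧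
  (∀ i, 1 ≤ m i) ∧
  (∀ i, IsRootOf Γ o (z i) (z i ^ m i)) ∧
  (∀ i, IsCompOf Γᶜ (supp Γ o u) (supp Γ o (z i))) ∧
  (∀ i j, i ≠ j → Disjoint (supp Γ o (z i)) (supp Γ o (z j))) ∧
  supp Γ o u = ⋃ i, supp Γ o (z i)

/-- Labeled graph automorphisms. -/
def IsLabeledGraphAuto (θ : MulAut (W Γ o)) : Prop :=
  ∃ γ : Γ ≃g Γ, (∀ v, o (γ v) = o v) ∧ ∀ v, θ (gen Γ o v) = gen Γ o (γ v)

/-- Factor automorphisms. -/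
def IsFactorAuto (θ : MulAut (W Γ o)) : Prop :=
  ∃ (v : V) (m : ℤ),
    ((o v = 0 ∧ m = -1) ∨ (o v ≠ 0 ∧ m ≠ 1 ∧ Int.gcd m (o v) = 1)) ∧
    θ (gen Γ o v) = gen Γ o v ^ m ∧ ∀ z, z ≠ v → θ (gen Γ o z) = gen Γ o z

/-- The map `x ↦ x y^q`, fixing all other vertices, extends to an endomorphism. -/
def TransvectionExtends (x y : V) (q : ℕ) : Prop :=
  ∃ e : W Γ o →* W Γ o, e (gen Γ o x) = gen Γ o x * gen Γ o y ^ q ∧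
    ∀ z, z ≠ x → e (gen Γ o z) = gen Γ o z

/-- `θ` is the dominated transvection `τ_{x,y}^q` with `q ≥ 1` minimal well-defined. -/
def IsDTransvOn (x y : V) (θ : MulAut (W Γ o)) : Prop :=
  x ≠ y ∧ ∃ q : ℕ, 1 ≤ q ∧ TransvectionExtends Γ o x y q ∧
    (∀ q' : ℕ, 1 ≤ q' → TransvectionExtends Γ o x y q' → q ≤ q') ∧
    θ (gen Γ o x) = gen Γ o x * gen Γ o y ^ q ∧
    ∀ z, z ≠ x → θ (gen Γ o z) = gen Γ o z

/-- Well-defined dominated transvections. -/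
def IsDominatedTransvection (θ : MulAut (W Γ o)) : Prop := ∃ x y, IsDTransvOn Γ o x y θ

/-- `★`-transvections: dominated transvections with `x` adjacent to `y`. -/
def IsStarTransvection (θ : MulAut (W Γ o)) : Prop :=
  ∃ x y, Γ.Adj x y ∧ IsDTransvOn Γ o x y θ

/-- Partial conjugations `σ_{K,v}`. -/
def IsPartialConj (θ : MulAut (W Γ o)) : Prop :=
  ∃ (v : V) (K : Set V), IsCompOf Γ ((vstar Γ v)ᶜ) K ∧
    (∀ x ∈ K, θ (gen Γ o x) = gen Γ o v * gen Γ o x * (gen Γ o v)⁻¹) ∧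
    (∀ x, x ∉ K → θ (gen Γ o x) = gen Γ o x)

/-- The generating set `𝒢` of elementary automorphisms. -/
def ElemSet : Set (MulAut (W Γ o)) :=
  {θ | IsLabeledGraphAuto Γ o θ ∨ IsFactorAuto Γ o θ ∨
    IsDominatedTransvection Γ o θ ∨ IsPartialConj Γ o θ}

/-- The subgroup `E(G)` generated by the elementary automorphisms. -/
def EGroup : Subgroup (MulAut (W Γ o)) := Subgroup.closure (ElemSet Γ o)

/-- The generating set `𝒢★`. -/
def GStarSet : Set (MulAut (W Γ o)) :=
  {θ | IsLabeledGraphAuto Γ o θ ∨ IsFactorAuto Γ o θ ∨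
    IsStarTransvection Γ o θ ∨ IsPartialConj Γ o θ}

/-- `θ` is simple: `v ∈ csupp θ(v)` and `⟨csupp θ(v)⟩ᶜ` is connected, for all `v`. -/
def IsSimple (θ : MulAut (W Γ o)) : Prop :=
  ∀ v : V, v ∈ csupp Γ o (θ (gen Γ o v)) ∧
    (SimpleGraph.induce (csupp Γ o (θ (gen Γ o v))) Γᶜ).Connected

/-- `θ` is quasi-simple: `⟨csupp θ(v)⟩ᶜ` is connected and `csupp θ(v) ⊆ Γ_v`, for all `v`. -/
def IsQuasiSimple (θ : MulAut (W Γ o)) : Prop :=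
  ∀ v : V, (SimpleGraph.induce (csupp Γ o (θ (gen Γ o v))) Γᶜ).Connected ∧
    csupp Γ o (θ (gen Γ o v)) ⊆ GammaSet Γ v

/-- `θ` is conjugating: `θ(x)` is conjugate to `x` for all vertices `x`. -/
def IsConjugating (θ : MulAut (W Γ o)) : Prop :=
  ∀ x : V, ∃ w : W Γ o, θ (gen Γ o x) = w * gen Γ o x * w⁻¹

/-- `Δ` is a maximal complete subgraph (maximal clique) of `Γ`. -/
def IsMaxClique (Δ : Set V) : Prop :=
  Γ.IsClique Δ ∧ ∀ Δ' : Set V, Γ.IsClique Δ' → Δ ⊆ Δ' → Δ' = Δ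

/-- Evaluation of a single letter `v^{±1}`. -/
def evalLetter (x : V × Bool) : W Γ o := if x.2 then gen Γ o x.1 else (gen Γ o x.1)⁻¹

/-- Evaluation of a word of letters. -/
def evalL (l : List (V × Bool)) : W Γ o := (l.map (evalLetter Γ o)).prod

/-- `x` is a first letter of `g`, i.e. `g = x g'` reduced. -/
def IsFirstLetter (x : V × Bool) (g : W Γ o) : Prop :=
  len Γ o ((evalLetter Γ o x)⁻¹ * g) + 1 = len Γ o g

/-- `x` is a last letter of `g`, i.e. `g = g' x` reduced. -/
def IsLastLetter (x : V × Bool) (g : W Γ o) : Prop :=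
  len Γ o (g * (evalLetter Γ o x)⁻¹) + 1 = len Γ o g

/-- A single conjugation step `a ↦ x a x⁻¹` is of reduction type `k ∈ {1,2,3,4}`. -/
def StepType (k : ℕ) (x : V × Bool) (a : W Γ o) : Prop :=
  match k with
  | 1 => ∀ s ∈ supp Γ o a, Commute (gen Γ o s) (gen Γ o x.1)
  | 2 => IsFirstLetter Γ o (x.1, !x.2) a ∧
      ¬ IsLastLetter Γ o x (evalLetter Γ o x * a)
  | 3 => IsLastLetter Γ o x a ∧
      ¬ IsFirstLetter Γ o (x.1, !x.2) (a * (evalLetter Γ o x)⁻¹)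
  | 4 => len Γ o (evalLetter Γ o x * a * (evalLetter Γ o x)⁻¹) = len Γ o a + 2
  | _ => False

/-- Conjugation by a letter. -/
def conjLetter (x : V × Bool) (a : W Γ o) : W Γ o :=
  evalLetter Γ o x * a * (evalLetter Γ o x)⁻¹

/-- Apply a list of letters (given right-to-left) by successive conjugation. -/
def applyRev : List (V × Bool) → W Γ o → W Γ o
  | [], a => a
  | x :: xs, a => applyRev xs (conjLetter Γ o x a)

/-- Each successive conjugation step by the letters (listed right-to-left) has type `k`. -/
def StepsRev (k : ℕ) : List (V × Bool) → W Γ o → Prop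
  | [], _ => True
  | x :: xs, a => StepType Γ o k x a ∧ StepsRev k xs (conjLetter Γ o x a)

/-- `w₄w₃w₂w₁` (as letter words `l4 l3 l2 l1`) is a reduction decomposition of
`w = w₄w₃w₂w₁` relative to the cyclically reduced element `u`: the concatenation is
reduced, computing `wuw⁻¹` letter by letter from the right each letter of `w_k` effects
a reduction of type `k`, and `w₁, w₂, w₃` pairwise commute. -/
def IsReductionDecomp (u : W Γ o) (l4 l3 l2 l1 : List (V × Bool)) : Prop :=
  (l4 ++ l3 ++ l2 ++ l1).length = len Γ o (evalL Γ o (l4 ++ l3 ++ l2 ++ l1)) ∧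
  StepsRev Γ o 1 l1.reverse u ∧
  StepsRev Γ o 2 l2.reverse (applyRev Γ o l1.reverse u) ∧
  StepsRev Γ o 3 l3.reverse (applyRev Γ o (l2 ++ l1).reverse u) ∧
  StepsRev Γ o 4 l4.reverse (applyRev Γ o (l3 ++ l2 ++ l1).reverse u) ∧
  Commute (evalL Γ o l1) (evalL Γ o l2) ∧
  Commute (evalL Γ o l1) (evalL Γ o l3) ∧
  Commute (evalL Γ o l2) (evalL Γ o l3)

/-- `b` has no initial letter among the vertices of `S`. -/
def NoInitialLetterIn (S : Set V) (b : W Γ o) : Prop :=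
  ∀ x ∈ S, ∀ e : Bool, ¬ IsFirstLetter Γ o (x, e) b

/-- `g = h v^{n₁} b₁ ⋯ v^{n_k} b_k` is a normal form for the amalgamated decomposition
`W(Γ) = W(v★) ∗_H W(Γ∖v)`, `H = ⟨lk v⟩`: `h ∈ H`, each `b_i ∈ W(Γ∖v)` has no initial
letter in `H`, and only `h`, `n₁` or `b_k` may be trivial. -/
def IsNormalForm (v : V) (g h : W Γ o) (k : ℕ)
    (n : Fin k → ℤ) (b : Fin k → W Γ o) : Prop :=
  h ∈ genSubgroup Γ o (Γ.neighborSet v) ∧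
  (∀ i, b i ∈ genSubgroup Γ o ({v}ᶜ : Set V)) ∧
  (∀ i, NoInitialLetterIn Γ o (Γ.neighborSet v) (b i)) ∧
  (∀ i : Fin k, (i : ℕ) ≠ 0 → n i ≠ 0) ∧
  (∀ i : Fin k, (i : ℕ) + 1 ≠ k → b i ≠ 1) ∧
  g = h * (List.ofFn fun i => gen Γ o v ^ n i * b i).prod

end GP

namespace GP

/-! ### Pilings: normal forms for the elements of a graph product -/

section Piling

variable {V : Type} (Γ : SimpleGraph V) (o : V → ℕ)

open Classical in
/-- A family `p` of stacks, one for each vertex, is a piling. `push` puts the syllable `u ^ k` in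
front: `k` goes on top of the stack of `u`, and a blocking entry `0` on top of the stack of every
vertex that does not commute with `u`. The head of a list is the top of its stack. -/
noncomputable def push (u : V) (k : ZMod (o u)) (p : ∀ v, List (ZMod (o v))) :
    ∀ v, List (ZMod (o v)) :=
  Function.update (fun v => if Γ.Adj u v then p v else 0 :: p v) u (k :: p u)

open Classical in
/-- Removes the top entry from the stack of `u` and of every vertex not commuting with `u`; this
undoes `push u k`. -/
noncomputable def pop (u : V) (p : ∀ v, List (ZMod (o v))) : ∀ v, List (ZMod (o v)) :=
  fun v => if Γ.Adj u v then p v else (p v).tail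

/-- The top entry of the stack of `u`. It is `0` when that stack is empty or blocked; a nonzero
value is the exponent of a syllable of `u` which can be moved to the front. -/
def hd (u : V) (p : ∀ v, List (ZMod (o v))) : ZMod (o u) := (p u).headD 0

/-- The pilings obtained from the empty one by pushing nontrivial syllables, never onto a stack
showing a syllable of the same vertex. They are the normal forms of the elements of `W Γ o`. -/
inductive Valid : (∀ v, List (ZMod (o v))) → Prop
  | nil : Valid (fun _ => [])
  | push (u : V) (k : ZMod (o u)) (p) : Valid p → hd o u p = 0 → k ≠ 0 → Valid (push Γ o u k p)

open Classical in
/-- `push`, except that the trivial syllable leaves the piling unchanged. -/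
noncomputable def put (u : V) (k : ZMod (o u)) (p : ∀ v, List (ZMod (o v))) :
    ∀ v, List (ZMod (o v)) := if k = 0 then p else push Γ o u k p

open Classical in
/-- Removes the initial syllable of `u`, if there is one. -/
noncomputable def strip (u : V) (p : ∀ v, List (ZMod (o v))) : ∀ v, List (ZMod (o v)) :=
  if hd o u p = 0 then p else pop Γ o u p

variable {Γ o}

lemma push_self (u : V) (k : ZMod (o u)) (p) : push Γ o u k p u = k :: p u := by
  simp [push]

lemma push_adj {u v : V} (h : Γ.Adj u v) (k : ZMod (o u)) (p) : push Γ o u k p v = p v := by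
  simp [push, h, h.ne.symm]

lemma push_nadj {u v : V} (h : ¬ Γ.Adj u v) (hne : v ≠ u) (k : ZMod (o u)) (p) :
    push Γ o u k p v = 0 :: p v := by
  simp [push, h, hne]

lemma pop_push (u : V) (k : ZMod (o u)) (p) : pop Γ o u (push Γ o u k p) = p := by
  funext v
  by_cases hv : v = u
  · subst hv; simp [pop, push]
  · by_cases h : Γ.Adj u v
    · simp [pop, h, push_adj h]
    · simp [pop, h, push_nadj h hv]

lemma hd_push_self (u : V) (k : ZMod (o u)) (p) : hd o u (push Γ o u k p) = k := by
  simp [hd, push_self]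

lemma hd_push_adj {u v : V} (h : Γ.Adj u v) (k : ZMod (o u)) (p) :
    hd o v (push Γ o u k p) = hd o v p := by
  simp [hd, push_adj h]

lemma hd_push_nadj {u v : V} (h : ¬ Γ.Adj u v) (hne : v ≠ u) (k : ZMod (o u)) (p) :
    hd o v (push Γ o u k p) = 0 := by
  simp [hd, push_nadj h hne]

lemma push_comm {u v : V} (h : Γ.Adj u v) (k : ZMod (o u)) (j : ZMod (o v)) (p) :
    push Γ o u k (push Γ o v j p) = push Γ o v j (push Γ o u k p) := by
  funext w
  by_cases hu : w = u
  · subst hu; simp [push_self, push_adj h.symm]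
  by_cases hv : w = v
  · subst hv; simp [push_self, push_adj h]
  by_cases h1 : Γ.Adj u w <;> by_cases h2 : Γ.Adj v w <;>
    simp [push, h1, h2, hu, hv]

lemma hd_put_self (u : V) (k : ZMod (o u)) {p} (hp : hd o u p = 0) :
    hd o u (put Γ o u k p) = k := by
  unfold put; split_ifs with h
  · rw [hp, h]
  · exact hd_push_self u k p

lemma hd_put_adj {u v : V} (h : Γ.Adj u v) (k : ZMod (o u)) (p) :
    hd o v (put Γ o u k p) = hd o v p := by
  unfold put; split_ifs
  · rfl
  · exact hd_push_adj h k p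

lemma strip_put (u : V) (k : ZMod (o u)) {p} (hp : hd o u p = 0) :
    strip Γ o u (put Γ o u k p) = p := by
  unfold strip
  rw [hd_put_self u k hp]
  by_cases h : k = 0
  · simp [h, put]
  · simp [h, put, pop_push]

lemma put_comm {u v : V} (h : Γ.Adj u v) (k : ZMod (o u)) (j : ZMod (o v)) (p) :
    put Γ o u k (put Γ o v j p) = put Γ o v j (put Γ o u k p) := by
  unfold put; split_ifs <;> first | rfl | exact push_comm h k j p

lemma Valid.put (u : V) (k : ZMod (o u)) {p} (hv : Valid Γ o p) (hp : hd o u p = 0) :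
    Valid Γ o (put Γ o u k p) := by
  unfold GP.put; split_ifs with h
  · exact hv
  · exact Valid.push u k p hv hp h

/-- A nonzero top entry at `u` can be taken as the last one pushed: the syllable moves to the front
past the commuting syllables pushed after it. -/
lemma Valid.exists_push {p} (hp : Valid Γ o p) (u : V) (hu : hd o u p ≠ 0) :
    ∃ q, Valid Γ o q ∧ hd o u q = 0 ∧ p = GP.push Γ o u (hd o u p) q := by
  induction hp with
  | nil => simp [hd] at hu
  | push w k q hq h0 hk ih =>
    by_cases hw : u = w
    · subst hw
      exact ⟨q, hq, h0, by rw [hd_push_self]⟩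
    · by_cases hadj : Γ.Adj w u
      · rw [hd_push_adj hadj] at hu ⊢
        obtain ⟨r, hr, hr0, hqr⟩ := ih hu
        refine ⟨GP.push Γ o w k r, Valid.push w k r hr ?_ hk, ?_, ?_⟩
        · rw [hqr, hd_push_adj hadj.symm] at h0; exact h0
        · rw [hd_push_adj hadj]; exact hr0
        · rw [← push_comm hadj, ← hqr]
      · exact absurd (hd_push_nadj hadj hw k q) hu

lemma Valid.exists_put {p} (hp : Valid Γ o p) (u : V) :
    ∃ q k, Valid Γ o q ∧ hd o u q = 0 ∧ p = GP.put Γ o u k q := by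
  by_cases hu : hd o u p = 0
  · exact ⟨p, 0, hp, hu, by simp [GP.put]⟩
  · obtain ⟨q, hq, h0, e⟩ := hp.exists_push u hu
    exact ⟨q, hd o u p, hq, h0, by rw [GP.put, if_neg hu]; exact e⟩

/-- Two vertices which do not commute cannot both begin a normal form. -/
lemma Valid.hd_eq_zero {p} (hp : Valid Γ o p) {u v : V} (hne : v ≠ u) (h : ¬ Γ.Adj u v)
    (hu : hd o u p ≠ 0) : hd o v p = 0 := by
  obtain ⟨q, -, -, e⟩ := hp.exists_push u hu
  rw [e, hd_push_nadj h hne]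

variable (Γ o) in
/-- Left multiplication by `u ^ k` on pilings: the exponent of the initial syllable of `u` is
increased by `k`. -/
noncomputable def actFun (u : V) (k : ZMod (o u)) (p : ∀ v, List (ZMod (o v))) :
    ∀ v, List (ZMod (o v)) := put Γ o u (hd o u p + k) (strip Γ o u p)

lemma actFun_put (u : V) (k j : ZMod (o u)) {p} (hp : hd o u p = 0) :
    actFun Γ o u k (put Γ o u j p) = put Γ o u (j + k) p := by
  rw [actFun, hd_put_self u j hp, strip_put u j hp]

lemma actFun_valid (u : V) (k : ZMod (o u)) {p} (hp : Valid Γ o p) :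
    Valid Γ o (actFun Γ o u k p) := by
  obtain ⟨q, j, hq, h0, rfl⟩ := hp.exists_put u
  rw [actFun_put u k j h0]
  exact hq.put u _ h0

lemma actFun_zero (u : V) {p} (hp : Valid Γ o p) : actFun Γ o u 0 p = p := by
  obtain ⟨q, j, hq, h0, rfl⟩ := hp.exists_put u
  rw [actFun_put u _ j h0, add_zero]

lemma actFun_add (u : V) (k l : ZMod (o u)) {p} (hp : Valid Γ o p) :
    actFun Γ o u k (actFun Γ o u l p) = actFun Γ o u (l + k) p := by
  obtain ⟨q, j, hq, h0, rfl⟩ := hp.exists_put u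
  rw [actFun_put u _ j h0, actFun_put u _ _ h0, actFun_put u _ j h0, add_assoc]

lemma actFun_comm {u v : V} (h : Γ.Adj u v) (k : ZMod (o u)) (l : ZMod (o v)) {p}
    (hp : Valid Γ o p) :
    actFun Γ o u k (actFun Γ o v l p) = actFun Γ o v l (actFun Γ o u k p) := by
  obtain ⟨q, j, hq, h0, rfl⟩ := hp.exists_put u
  obtain ⟨r, i, hr, h1, rfl⟩ := hq.exists_put v
  have h2 : hd o u r = 0 := by rwa [hd_put_adj h.symm] at h0
  have h3 : ∀ m, hd o v (put Γ o u m r) = 0 := fun m => by rw [hd_put_adj h, h1]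
  have h4 : ∀ m, hd o u (put Γ o v m r) = 0 := fun m => by rw [hd_put_adj h.symm, h2]
  rw [actFun_put u _ _ h0, put_comm h j i, actFun_put v _ _ (h3 _), ← put_comm h,
    actFun_put u _ _ (h4 _), put_comm h (j + k) i, actFun_put v _ _ (h3 _), put_comm h]

lemma hd_actFun_self (u : V) (k : ZMod (o u)) {p} (hp : Valid Γ o p) :
    hd o u (actFun Γ o u k p) = hd o u p + k := by
  obtain ⟨q, j, hq, h0, rfl⟩ := hp.exists_put u
  rw [actFun_put u _ j h0, hd_put_self u _ h0, hd_put_self u _ h0]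

lemma hd_actFun_adj {u v : V} (h : Γ.Adj u v) (k : ZMod (o u)) {p} (hp : Valid Γ o p) :
    hd o v (actFun Γ o u k p) = hd o v p := by
  obtain ⟨q, j, hq, h0, rfl⟩ := hp.exists_put u
  rw [actFun_put u _ j h0, hd_put_adj h, hd_put_adj h]

variable (Γ o) in
/-- The permutation of the set of valid pilings by which the generator `u` acts. -/
noncomputable def actPerm (u : V) : Equiv.Perm {p // Valid Γ o p} where
  toFun p := ⟨actFun Γ o u 1 p.1, actFun_valid u 1 p.2⟩
  invFun p := ⟨actFun Γ o u (-1) p.1, actFun_valid u (-1) p.2⟩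
  left_inv p := by
    ext1; simp only
    rw [actFun_add u _ _ p.2, add_neg_cancel, actFun_zero u p.2]
  right_inv p := by
    ext1; simp only
    rw [actFun_add u _ _ p.2, neg_add_cancel, actFun_zero u p.2]

lemma actPerm_pow (u : V) (n : ℕ) (p : {p // Valid Γ o p}) :
    ((actPerm Γ o u ^ n) p).1 = actFun Γ o u n p.1 := by
  induction n with
  | zero => simp [actFun_zero u p.2]
  | succ n ih =>
    rw [pow_succ', Equiv.Perm.mul_apply]
    change actFun Γ o u 1 _ = _
    rw [ih, actFun_add u _ _ p.2]; push_cast; rfl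

end Piling

/-! ### Exponent sums and initial exponents -/

section Basic

variable {V : Type} {Γ : SimpleGraph V} {o : V → ℕ}

lemma gen_pow_o (v : V) : gen Γ o v ^ o v = 1 := by
  by_cases h : o v = 0
  · rw [h, pow_zero]
  · have : (PresentedGroup.mk (rels Γ o)) (FreeGroup.of v ^ o v) = 1 := by
      apply PresentedGroup.one_of_mem
      exact Or.inl ⟨v, h, rfl⟩
    rw [map_pow] at this
    exact this

lemma gen_comm {u v : V} (h : Γ.Adj u v) : Commute (gen Γ o u) (gen Γ o v) := by
  have : (PresentedGroup.mk (rels Γ o)) (FreeGroup.of u * FreeGroup.of v * (FreeGroup.of u)⁻¹ *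
      (FreeGroup.of v)⁻¹) = 1 := by
    apply PresentedGroup.one_of_mem
    exact Or.inr ⟨u, v, h, rfl⟩
  simp only [map_mul, map_inv] at this
  rw [mul_inv_eq_one, mul_inv_eq_iff_eq_mul] at this
  exact this

/-- Universal property of the graph product. -/
noncomputable def lift {H : Type*} [Group H] (f : V → H) (h1 : ∀ v, f v ^ o v = 1)
    (h2 : ∀ u v, Γ.Adj u v → Commute (f u) (f v)) : W Γ o →* H :=
  PresentedGroup.toGroup (f := f) (by
    rintro r (⟨v, -, rfl⟩ | ⟨x, y, hxy, rfl⟩)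
    · simp [h1]
    · simp only [map_mul, map_inv, FreeGroup.lift_apply_of]
      rw [(h2 x y hxy).eq]; group)

@[simp] lemma lift_gen {H : Type*} [Group H] (f : V → H) (h1 : ∀ v, f v ^ o v = 1)
    (h2 : ∀ u v, Γ.Adj u v → Commute (f u) (f v)) (v : V) :
    lift (Γ := Γ) f h1 h2 (gen Γ o v) = f v := PresentedGroup.toGroup.of _

lemma hom_ext {H : Type*} [Group H] {f g : W Γ o →* H}
    (h : ∀ v, f (gen Γ o v) = g (gen Γ o v)) : f = g := PresentedGroup.ext h

lemma aut_ext {f g : MulAut (W Γ o)} (h : ∀ v, f (gen Γ o v) = g (gen Γ o v)) : f = g := by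
  have := hom_ext (f := f.toMonoidHom) (g := g.toMonoidHom) h
  ext x
  exact DFunLike.congr_fun this x

lemma gen_zpow_eq_one {v : V} {k : ℤ} (h : (k : ZMod (o v)) = 0) : gen Γ o v ^ k = 1 := by
  obtain ⟨j, rfl⟩ := (ZMod.intCast_zmod_eq_zero_iff_dvd k (o v)).1 h
  rw [zpow_mul, zpow_natCast, gen_pow_o, one_zpow]

lemma closure_gen : Subgroup.closure (Set.range (gen Γ o)) = ⊤ :=
  PresentedGroup.closure_range_of _

lemma genSubgroup_univ : genSubgroup Γ o Set.univ = ⊤ := by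
  rw [genSubgroup, Set.image_univ, closure_gen]

lemma gen_mem {S : Set V} {v : V} (h : v ∈ S) : gen Γ o v ∈ genSubgroup Γ o S :=
  Subgroup.subset_closure ⟨v, h, rfl⟩

lemma genSubgroup_mono {S T : Set V} (h : S ⊆ T) : genSubgroup Γ o S ≤ genSubgroup Γ o T :=
  Subgroup.closure_mono (Set.image_mono h)

open Classical in
/-- The homomorphism to `ℤ/o(v)` counting occurrences of `v`. -/
noncomputable def coordHom (v : V) : W Γ o →* Multiplicative (ZMod (o v)) :=
  lift (fun w => if w = v then Multiplicative.ofAdd 1 else 1)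
    (by
      intro w
      split_ifs with h
      · subst h; rw [← ofAdd_nsmul]; simp
      · exact one_pow _)
    (fun _ _ _ => Commute.all _ _)

/-- The exponent sum of the vertex `v` in a group element, an element of `ℤ/o(v)`. -/
noncomputable def coord (v : V) (g : W Γ o) : ZMod (o v) := Multiplicative.toAdd (coordHom v g)

@[simp] lemma coord_one (v : V) : coord v (1 : W Γ o) = 0 := by simp [coord]
lemma coord_mul (v : V) (g h : W Γ o) : coord v (g * h) = coord v g + coord v h := by simp [coord]
lemma coord_inv (v : V) (g : W Γ o) : coord v g⁻¹ = - coord v g := by simp [coord]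
lemma coord_zpow (v : V) (g : W Γ o) (n : ℤ) : coord v (g ^ n) = n * coord v g := by
  simp [coord]
lemma coord_pow (v : V) (g : W Γ o) (n : ℕ) : coord v (g ^ n) = n * coord v g := by
  simp [coord]
@[simp] lemma coord_self (v : V) : coord v (gen Γ o v) = 1 := by simp [coord, coordHom]
lemma coord_ne {v w : V} (h : w ≠ v) : coord v (gen Γ o w) = 0 := by simp [coord, coordHom, h]

lemma coord_conj (v : V) (g x : W Γ o) : coord v (g * x * g⁻¹) = coord v x := by
  rw [coord_mul, coord_mul, coord_inv]; ring

/-- The action of the graph product on valid pilings. -/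
noncomputable def pilingHom : W Γ o →* Equiv.Perm {p // Valid Γ o p} :=
  lift (actPerm Γ o)
    (by
      intro v
      ext1 p; ext1
      rw [actPerm_pow]; simp [actFun_zero v p.2])
    (by
      intro u v h
      ext1 p; ext1
      exact actFun_comm h 1 1 p.2)

/-- The exponent of the initial syllable of `v` in `g`: the `k : ℤ/o(v)` for which `g = v ^ k * h`
with no syllable of `v` movable to the front of `h`; it is `0` if `g` does not begin with `v`. The
fibres of `ini v` are the sectors into which the wall of `v` divides the group. -/
noncomputable def ini (v : V) (g : W Γ o) : ZMod (o v) :=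
  hd o v (pilingHom g ⟨fun _ => [], Valid.nil⟩).1

@[simp] lemma ini_one (v : V) : ini v (1 : W Γ o) = 0 := by simp [ini, hd]

lemma ini_eq_zero {u v : V} (hne : v ≠ u) (h : ¬ Γ.Adj u v) {g : W Γ o} (hu : ini u g ≠ 0) :
    ini v g = 0 := Valid.hd_eq_zero (pilingHom g _).2 hne h hu

/-- The stabilizer `⟨v★⟩` of the wall of `v` permutes its sectors by translation. -/
lemma ini_star {v : V} {c : W Γ o} (hc : c ∈ genSubgroup Γ o (vstar Γ v)) (h : W Γ o) :
    ini v (c * h) = coord v c + ini v h := by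
  induction hc using Subgroup.closure_induction generalizing h with
  | mem x hx =>
    obtain ⟨w, hw, rfl⟩ := hx
    have e : (pilingHom (gen Γ o w * h) ⟨fun _ => [], Valid.nil⟩).1 =
        actFun Γ o w 1 (pilingHom h ⟨fun _ => [], Valid.nil⟩).1 := by
      rw [map_mul, Equiv.Perm.mul_apply]
      simp only [pilingHom]; rfl
    rcases hw with rfl | hw
    · rw [ini, e, hd_actFun_self _ _ (pilingHom h _).2, coord_self, add_comm]; rfl
    · have hw : Γ.Adj v w := hw
      rw [ini, e, hd_actFun_adj hw.symm _ (pilingHom h _).2, coord_ne hw.ne.symm, zero_add]; rfl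
  | one => simp
  | mul x y _ _ hx hy => rw [mul_assoc, hx, hy, coord_mul, add_assoc]
  | inv x _ hx =>
    have := hx (x⁻¹ * h)
    rw [mul_inv_cancel_left] at this
    rw [this, coord_inv]; ring

lemma self_mem_vstar (v : V) : v ∈ vstar Γ v := Set.mem_insert _ _
lemma adj_mem_vstar {v w : V} (h : Γ.Adj v w) : w ∈ vstar Γ v := Set.mem_insert_of_mem _ h
lemma mem_vstar {v w : V} : w ∈ vstar Γ v ↔ w = v ∨ Γ.Adj v w := Iff.rfl
lemma mem_vstar_comm {v w : V} : w ∈ vstar Γ v ↔ v ∈ vstar Γ w := by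
  rw [mem_vstar, mem_vstar, eq_comm, Γ.adj_comm]

lemma zpow_mem_star {v w : V} (h : w ∈ vstar Γ v) (k : ℤ) :
    gen Γ o w ^ k ∈ genSubgroup Γ o (vstar Γ v) := Subgroup.zpow_mem _ (gen_mem h) k

lemma ini_zpow_self (v : V) (k : ℤ) (h : W Γ o) : ini v (gen Γ o v ^ k * h) = k + ini v h := by
  rw [ini_star (zpow_mem_star (self_mem_vstar v) k), coord_zpow, coord_self, mul_one]

lemma ini_zpow_adj {v w : V} (hw : Γ.Adj v w) (k : ℤ) (h : W Γ o) :
    ini v (gen Γ o w ^ k * h) = ini v h := by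
  rw [ini_star (zpow_mem_star (adj_mem_vstar hw) k), coord_zpow, coord_ne hw.ne.symm, mul_zero,
    zero_add]

lemma ini_nstar {u v : V} (h : v ∉ vstar Γ u) {g : W Γ o} (hu : ini u g ≠ 0) : ini v g = 0 := by
  rw [mem_vstar, not_or] at h
  exact ini_eq_zero h.1 h.2 hu

lemma commute_star {v w : V} (h : w ∈ vstar Γ v) : Commute (gen Γ o v) (gen Γ o w) := by
  rcases h with rfl | h
  · exact Commute.refl _
  · exact gen_comm h

lemma commute_of_mem_star {v : V} {c : W Γ o} (hc : c ∈ genSubgroup Γ o (vstar Γ v)) :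
    Commute (gen Γ o v) c := by
  have : genSubgroup Γ o (vstar Γ v) ≤ Subgroup.centralizer {gen Γ o v} := by
    rw [genSubgroup, Subgroup.closure_le]
    rintro _ ⟨w, hw, rfl⟩
    rw [SetLike.mem_coe, Subgroup.mem_centralizer_singleton_iff]
    exact (commute_star hw).eq.symm
  exact (Subgroup.mem_centralizer_singleton_iff.1 (this hc)).symm

end Basic

/-! ### Syllable length and cancellation -/

section Length

variable {V : Type} {Γ : SimpleGraph V} {o : V → ℕ}

@[simp] lemma evalWord_nil : evalWord Γ o [] = 1 := rfl
@[simp] lemma evalWord_cons (p : V × ℤ) (l : List (V × ℤ)) :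
    evalWord Γ o (p :: l) = gen Γ o p.1 ^ p.2 * evalWord Γ o l := by simp [evalWord]
lemma evalWord_append (l l' : List (V × ℤ)) :
    evalWord Γ o (l ++ l') = evalWord Γ o l * evalWord Γ o l' := by simp [evalWord]

lemma exists_word {S : Set V} {g : W Γ o} (hg : g ∈ genSubgroup Γ o S) :
    ∃ l : List (V × ℤ), (∀ p ∈ l, p.1 ∈ S) ∧ evalWord Γ o l = g := by
  induction hg using Subgroup.closure_induction with
  | mem x hx =>
    obtain ⟨v, hv, rfl⟩ := hx
    exact ⟨[(v, 1)], by simpa using hv, by simp⟩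
  | one => exact ⟨[], by simp, rfl⟩
  | mul x y _ _ hx hy =>
    obtain ⟨l, hl, rfl⟩ := hx
    obtain ⟨l', hl', rfl⟩ := hy
    refine ⟨l ++ l', ?_, evalWord_append l l'⟩
    intro p hp
    rcases List.mem_append.1 hp with h | h
    exacts [hl p h, hl' p h]
  | inv x _ hx =>
    obtain ⟨l, hl, rfl⟩ := hx
    clear * - hl
    induction l with
    | nil => exact ⟨[], by simp, by simp⟩
    | cons p l ih =>
      obtain ⟨l', h1, h2⟩ := ih (fun q hq => hl q (List.mem_cons_of_mem _ hq))
      refine ⟨l' ++ [(p.1, -p.2)], ?_, ?_⟩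
      · intro q hq
        rcases List.mem_append.1 hq with h | h
        · exact h1 q h
        · rw [List.mem_singleton.1 h]; exact hl p List.mem_cons_self
      · rw [evalWord_append, h2]; simp

lemma exists_word' (g : W Γ o) : ∃ l : List (V × ℤ), evalWord Γ o l = g := by
  obtain ⟨l, -, h⟩ := exists_word (S := Set.univ) (g := g) (by rw [genSubgroup_univ]; trivial)
  exact ⟨l, h⟩

/-- The exchange property: an initial syllable `v ^ j` of the element spelled by a word can be
removed by shortening the word, without new letters, and `v` occurs in the word. -/
lemma exchange (l : List (V × ℤ)) (v : V) (j : ℤ)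
    (hj : (j : ZMod (o v)) = ini v (evalWord Γ o l)) (h0 : ini v (evalWord Γ o l) ≠ 0) :
    (∃ l' : List (V × ℤ), l'.length < l.length ∧
      evalWord Γ o l' = gen Γ o v ^ (-j) * evalWord Γ o l ∧
      l'.map Prod.fst ⊆ l.map Prod.fst) ∧ v ∈ l.map Prod.fst := by
  induction hn : l.length using Nat.strong_induction_on generalizing l v j with
  | _ n ih =>
  subst hn
  match l, hj, h0, ih with
  | [], _, h0, _ => simp at h0
  | (u, m) :: l, hj, h0, ih =>
    simp only [evalWord_cons, List.length_cons, List.map_cons] at *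
    by_cases huv : u = v
    · subst huv
      refine ⟨?_, List.mem_cons_self⟩
      rw [ini_zpow_self] at hj h0
      have hj' : ((j - m : ℤ) : ZMod (o u)) = ini u (evalWord Γ o l) := by
        push_cast; rw [hj]; ring
      by_cases hz : ini u (evalWord Γ o l) = 0
      · refine ⟨l, by simp, ?_, by simp⟩
        rw [← mul_assoc, ← zpow_add, gen_zpow_eq_one, one_mul]
        rw [← neg_eq_zero, ← hz, ← hj']; push_cast; ring
      · obtain ⟨⟨l', h1, h2, h3⟩, -⟩ := ih l.length (by simp) l u (j - m) hj' hz rfl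
        refine ⟨l', by omega, ?_, fun x hx => List.mem_cons_of_mem _ (h3 hx)⟩
        rw [h2, ← mul_assoc, ← zpow_add]; congr 2; ring
    · by_cases hadj : Γ.Adj v u
      · rw [ini_zpow_adj hadj] at hj h0
        obtain ⟨⟨l', h1, h2, h3⟩, h4⟩ := ih l.length (by simp) l v j hj h0 rfl
        refine ⟨⟨(u, m) :: l', by simpa using h1, ?_, ?_⟩, List.mem_cons_of_mem _ h4⟩
        · rw [evalWord_cons, h2, ← mul_assoc, ← mul_assoc,
            ((gen_comm hadj).zpow_zpow (-j) m).eq]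
        · simpa using List.cons_subset_cons u h3
      · have hu : ini u (gen Γ o u ^ m * evalWord Γ o l) = 0 := ini_eq_zero huv hadj h0
        rw [ini_zpow_self] at hu
        have hu' : ini u (evalWord Γ o l) = ((-m : ℤ) : ZMod (o u)) := by
          push_cast; exact (neg_eq_of_add_eq_zero_right hu).symm
        by_cases hm : (m : ZMod (o u)) = 0
        · rw [gen_zpow_eq_one hm, one_mul] at hj h0 ⊢
          obtain ⟨⟨l', h1, h2, h3⟩, h4⟩ := ih l.length (by simp) l v j hj h0 rfl
          exact ⟨⟨l', by omega, h2, fun x hx => List.mem_cons_of_mem _ (h3 hx)⟩,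
            List.mem_cons_of_mem _ h4⟩
        · obtain ⟨⟨l', h1, h2, h3⟩, -⟩ := ih l.length (by simp) l u (-m) hu'.symm
            (by rw [hu']; push_cast; exact neg_ne_zero.2 hm) rfl
          rw [neg_neg] at h2
          rw [← h2] at hj h0 ⊢
          obtain ⟨⟨l'', h5, h6, h7⟩, h8⟩ := ih l'.length (by omega) l' v j hj h0 rfl
          exact ⟨⟨l'', by omega, h6, fun x hx => List.mem_cons_of_mem _ (h3 (h7 hx))⟩,
            List.mem_cons_of_mem _ (h3 h8)⟩

lemma ini_supp {S : Set V} {c : W Γ o} (hc : c ∈ genSubgroup Γ o S) {v : V} (h : ini v c ≠ 0) :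
    v ∈ S := by
  obtain ⟨l, hl, rfl⟩ := exists_word hc
  obtain ⟨j, hj⟩ := ZMod.intCast_surjective (ini v (evalWord Γ o l))
  obtain ⟨p, hp, rfl⟩ := List.mem_map.1 (exchange l v j hj h).2
  exact hl p hp

lemma ini_not_mem {S : Set V} {c : W Γ o} (hc : c ∈ genSubgroup Γ o S) {v : V} (h : v ∉ S) :
    ini v c = 0 := by
  by_contra hne
  exact h (ini_supp hc hne)

/-- The syllable length: the least number of syllables in a word for `g`. -/
noncomputable def sl (g : W Γ o) : ℕ := sInf (List.length '' {l | evalWord Γ o l = g})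

lemma sl_word (g : W Γ o) : ∃ l, evalWord Γ o l = g ∧ l.length = sl g := by
  obtain ⟨l, hl⟩ := exists_word' g
  obtain ⟨l', h1, h2⟩ := Nat.sInf_mem (s := List.length '' {l | evalWord Γ o l = g}) ⟨_, l, hl, rfl⟩
  exact ⟨l', h1, h2⟩

lemma sl_le {g : W Γ o} {l} (h : evalWord Γ o l = g) : sl g ≤ l.length :=
  Nat.sInf_le ⟨l, h, rfl⟩

@[simp] lemma sl_one : sl (1 : W Γ o) = 0 := Nat.le_zero.1 (sl_le (l := []) rfl)

lemma sl_zpow_le (v : V) (k : ℤ) (h : W Γ o) : sl (gen Γ o v ^ k * h) ≤ sl h + 1 := by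
  obtain ⟨l, hl, e⟩ := sl_word h
  rw [← e]
  exact sl_le (l := (v, k) :: l) (by simp [hl])

lemma sl_lt {v : V} {j : ℤ} {h : W Γ o} (hj : (j : ZMod (o v)) = ini v h) (h0 : ini v h ≠ 0) :
    sl (gen Γ o v ^ (-j) * h) < sl h := by
  obtain ⟨l, rfl, e⟩ := sl_word h
  obtain ⟨⟨l', h1, h2, -⟩, -⟩ := exchange l v j hj h0
  rw [← h2, ← e]
  exact (sl_le rfl).trans_lt h1

lemma sl_add_one {v : V} {k : ℤ} {h : W Γ o} (hk : (k : ZMod (o v)) ≠ 0) (h0 : ini v h = 0) :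
    sl (gen Γ o v ^ k * h) = sl h + 1 := by
  apply le_antisymm (sl_zpow_le v k h)
  have e : ini v (gen Γ o v ^ k * h) = k := by rw [ini_zpow_self, h0, add_zero]
  have := sl_lt e.symm (by rwa [e])
  rwa [← mul_assoc, ← zpow_add, neg_add_cancel, zpow_zero, one_mul] at this

lemma exists_ini {h : W Γ o} (hne : h ≠ 1) : ∃ v, ini v h ≠ 0 := by
  obtain ⟨l, hl, e⟩ := sl_word h
  match l, hl, e with
  | [], hl, _ => exact absurd hl.symm hne
  | (v, m) :: l, hl, e =>
    refine ⟨v, fun hv => ?_⟩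
    rw [evalWord_cons] at hl
    have h1 : sl (evalWord Γ o l) < sl h := (sl_le rfl).trans_lt (by rw [← e]; simp)
    have hv' : ini v (evalWord Γ o l) = ((-m : ℤ) : ZMod (o v)) := by
      rw [← hl, ini_zpow_self] at hv
      push_cast; exact (neg_eq_of_add_eq_zero_right hv).symm
    by_cases hm : (m : ZMod (o v)) = 0
    · rw [gen_zpow_eq_one hm, one_mul] at hl
      exact absurd h1 (by rw [hl]; exact lt_irrefl _)
    · have := sl_lt hv'.symm (by rw [hv']; push_cast; exact neg_ne_zero.2 hm)
      rw [neg_neg] at this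
      simp only at hl
      rw [hl] at this
      exact lt_asymm this h1

/-- A nonzero initial exponent splits off an initial syllable, which lowers the syllable length. -/
lemma exists_syllable {h : W Γ o} {v : V} (h0 : ini v h ≠ 0) :
    ∃ (k : ℤ) (y : W Γ o), h = gen Γ o v ^ k * y ∧ (k : ZMod (o v)) ≠ 0 ∧ (k : ZMod (o v)) = ini v h ∧
      ini v y = 0 ∧ sl h = sl y + 1 := by
  obtain ⟨j, hj⟩ := ZMod.intCast_surjective (ini v h)
  have e : h = gen Γ o v ^ j * (gen Γ o v ^ (-j) * h) := by
    rw [← mul_assoc, ← zpow_add, add_neg_cancel, zpow_zero, one_mul]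
  have h1 : ini v (gen Γ o v ^ (-j) * h) = 0 := by
    rw [ini_zpow_self, ← hj]; push_cast; ring
  have h2 : (j : ZMod (o v)) ≠ 0 := by rwa [hj]
  refine ⟨j, _, e, h2, hj, h1, ?_⟩
  rw [← sl_add_one h2 h1, ← e]

/-- If `P` and `q` have no common initial vertex, then nothing cancels or merges in `P⁻¹ * q`. -/
lemma sl_inv_mul (P q : W Γ o) (h : ∀ t, ini t P = 0 ∨ ini t q = 0) :
    sl (P⁻¹ * q) = sl P + sl q := by
  induction hn : sl P generalizing P q with
  | zero =>
    have : P = 1 := by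
      by_contra hne
      obtain ⟨v, hv⟩ := exists_ini hne
      obtain ⟨k, y, -, -, -, -, h2⟩ := exists_syllable hv
      omega
    simp [this]
  | succ n ih =>
    have hne : P ≠ 1 := by rintro rfl; simp at hn
    obtain ⟨t, ht⟩ := exists_ini hne
    obtain ⟨k, y, hP, hk, -, hy, h2⟩ := exists_syllable ht
    have hq : ini t q = 0 := (h t).resolve_left ht
    have hnk : ((-k : ℤ) : ZMod (o t)) ≠ 0 := by push_cast; exact neg_ne_zero.2 hk
    have e : P⁻¹ * q = y⁻¹ * (gen Γ o t ^ (-k) * q) := by rw [hP]; group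
    rw [e, ih y _ ?_ (by omega), sl_add_one hnk hq]
    · omega
    · intro r
      by_cases hrt : r = t
      · subst hrt; exact Or.inl hy
      by_cases hadj : Γ.Adj r t
      · rw [ini_zpow_adj hadj]
        have := h r
        rwa [hP, ini_zpow_adj hadj] at this
      · right
        apply ini_eq_zero hrt (fun h' => hadj h'.symm)
        rw [ini_zpow_self, hq, add_zero]; exact hnk

lemma sl_inv_mul_le (P q : W Γ o) : sl (P⁻¹ * q) ≤ sl P + sl q := by
  induction hn : sl P using Nat.strong_induction_on generalizing P q with
  | _ n ih =>
    subst hn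
    by_cases hne : P = 1
    · simp [hne]
    obtain ⟨t, ht⟩ := exists_ini hne
    obtain ⟨k, y, hP, hk, -, hy, h2⟩ := exists_syllable ht
    have e : P⁻¹ * q = y⁻¹ * (gen Γ o t ^ (-k) * q) := by rw [hP]; group
    rw [e]
    have := ih (sl y) (by omega) y (gen Γ o t ^ (-k) * q) rfl
    have := sl_zpow_le t (-k) q
    omega

/-- If `y` begins with no vertex of `S`, then multiplying `d ∈ ⟨S⟩` by `y` on the right does not
change the initial exponents of `d` at the vertices of `S`. -/
lemma ini_mul_of_reduced {S : Set V} {y : W Γ o} (hy : ∀ r ∈ S, ini r y = 0) {d : W Γ o}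
    (hd : d ∈ genSubgroup Γ o S) {t : V} (ht : t ∈ S) : ini t (d * y) = ini t d := by
  induction hn : sl d using Nat.strong_induction_on generalizing d t with
  | _ n ih =>
    subst hn
    by_cases hne : d = 1
    · subst hne; simp [hy t ht]
    obtain ⟨r, hr⟩ := exists_ini hne
    have hrS := ini_supp hd hr
    obtain ⟨k, d', e, hk, -, hy', h2⟩ := exists_syllable hr
    have hd' : d' ∈ genSubgroup Γ o S := by
      rw [e] at hd
      exact (Subgroup.mul_mem_cancel_left _ (Subgroup.zpow_mem _ (gen_mem hrS) k)).1 hd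
    have hr' : ini r (d * y) = k := by
      rw [e, mul_assoc, ini_zpow_self, ih (sl d') (by omega) hd' hrS rfl, hy', add_zero]
    by_cases hrt : t = r
    · subst hrt; rw [hr', e, ini_zpow_self, hy', add_zero]
    by_cases hadj : Γ.Adj t r
    · rw [e, mul_assoc, ini_zpow_adj hadj, ini_zpow_adj hadj, ih (sl d') (by omega) hd' ht rfl]
    · rw [ini_eq_zero hrt (fun h => hadj h.symm) hr,
        ini_eq_zero hrt (fun h => hadj h.symm) (by rwa [hr'])]

end Length

/-! ### Walls -/

section Walls

variable {V : Type} {Γ : SimpleGraph V} {o : V → ℕ}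

/-- The wall of `u` divides the group into the sectors `{h | ini u h = a}` and has carrier `⟨u★⟩`; the
translate by `x` of the wall of `v` has sectors `{h | ini v (x⁻¹ * h) = b}` and carrier `x⟨v★⟩`. The two
walls are nested if each carrier lies in a single sector of the other wall, and these two sectors
cover the group. -/
def Nest (u v : V) (x : W Γ o) : Prop :=
  ∃ (a : ZMod (o u)) (b : ZMod (o v)), (∀ h, ini u h = a ∨ ini v (x⁻¹ * h) = b) ∧
    (∀ d ∈ genSubgroup Γ o (vstar Γ v), ini u (x * d) = a) ∧
    (∀ c ∈ genSubgroup Γ o (vstar Γ u), ini v (x⁻¹ * c) = b)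

/-- The wall of `u` and the translate by `x` of the wall of `v` cross or coincide: `u` and `v` are
equal or adjacent, and the carriers `⟨u★⟩` and `x⟨v★⟩` meet. -/
def Cross (u v : V) (x : W Γ o) : Prop :=
  v ∈ vstar Γ u ∧ ∃ c ∈ genSubgroup Γ o (vstar Γ u), ∃ d ∈ genSubgroup Γ o (vstar Γ v), x = c * d

lemma Nest.mul_right {u v : V} {x d : W Γ o} (hd : d ∈ genSubgroup Γ o (vstar Γ v))
    (h : Nest u v x) : Nest u v (x * d) := by
  obtain ⟨a, b, h1, h2, h3⟩ := h
  have key : ∀ y, ini v ((x * d)⁻¹ * y) = coord v d⁻¹ + ini v (x⁻¹ * y) := fun y => by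
    rw [mul_inv_rev, mul_assoc, ini_star (inv_mem hd)]
  refine ⟨a, coord v d⁻¹ + b, fun y => ?_, fun d' hd' => ?_, fun c hc => ?_⟩
  · rw [key]; exact (h1 y).imp id (fun e => by rw [e])
  · rw [mul_assoc]; exact h2 _ (mul_mem hd hd')
  · rw [key, h3 c hc]

lemma Nest.mul_left {u v : V} {x c : W Γ o} (hc : c ∈ genSubgroup Γ o (vstar Γ u))
    (h : Nest u v x) : Nest u v (c * x) := by
  obtain ⟨a, b, h1, h2, h3⟩ := h
  refine ⟨coord u c + a, b, fun y => ?_, fun d hd => ?_, fun c' hc' => ?_⟩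
  · have := h1 (c⁻¹ * y)
    rw [mul_inv_rev, mul_assoc]
    refine this.imp (fun e => ?_) id
    rw [← e, ← ini_star hc, mul_inv_cancel_left]
  · rw [mul_assoc, ini_star hc, h2 d hd]
  · rw [mul_inv_rev, mul_assoc]; exact h3 _ (mul_mem (inv_mem hc) hc')

lemma Cross.mul_right {u v : V} {x d : W Γ o} (hd : d ∈ genSubgroup Γ o (vstar Γ v))
    (h : Cross u v x) : Cross u v (x * d) := by
  obtain ⟨h1, c, hc, d', hd', rfl⟩ := h
  exact ⟨h1, c, hc, d' * d, mul_mem hd' hd, mul_assoc _ _ _⟩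

lemma Cross.mul_left {u v : V} {x c : W Γ o} (hc : c ∈ genSubgroup Γ o (vstar Γ u))
    (h : Cross u v x) : Cross u v (c * x) := by
  obtain ⟨h1, c', hc', d', hd', rfl⟩ := h
  exact ⟨h1, c * c', mul_mem hc hc', d', hd', (mul_assoc _ _ _).symm⟩

/-- Two walls cross, coincide, or are nested. For the induction on the syllable length, `x` is
made shortest in `x⟨v★⟩` and its initial syllable `t ^ k` is split off. -/
theorem cross_or_nest (u v : V) (x : W Γ o) : Cross u v x ∨ Nest u v x := by
  induction hn : sl x using Nat.strong_induction_on generalizing u v x with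
  | _ n ih =>
  subst hn
  by_cases hmin : ∃ d ∈ genSubgroup Γ o (vstar Γ v), sl (x * d) < sl x
  · obtain ⟨d, hd, hlt⟩ := hmin
    have e : x = x * d * d⁻¹ := by group
    rw [e]
    exact (ih _ hlt u v (x * d) rfl).imp (Cross.mul_right (inv_mem hd)) (Nest.mul_right (inv_mem hd))
  push Not at hmin
  by_cases hx : x = 1
  · subst hx
    by_cases huv : v ∈ vstar Γ u
    · exact Or.inl ⟨huv, 1, one_mem _, 1, one_mem _, by simp⟩
    · refine Or.inr ⟨0, 0, fun h => ?_, fun d hd => ?_, fun c hc => ?_⟩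
      · rw [inv_one, one_mul, or_iff_not_imp_left]
        exact ini_nstar huv
      · rw [one_mul]; exact ini_not_mem hd (by rwa [mem_vstar_comm])
      · rw [inv_one, one_mul]; exact ini_not_mem hc huv
  obtain ⟨t, ht⟩ := exists_ini hx
  obtain ⟨k, x', e, hk, hk', hx', hsl⟩ := exists_syllable ht
  by_cases htu : t ∈ vstar Γ u
  · have hm : gen Γ o t ^ k ∈ genSubgroup Γ o (vstar Γ u) := zpow_mem_star htu k
    rw [e]
    exact (ih _ (by omega) u v x' rfl).imp (Cross.mul_left hm) (Nest.mul_left hm)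
  have hut : u ∉ vstar Γ t := by rwa [mem_vstar_comm]
  rcases ih _ (by omega) t v x' rfl with h | h
  · -- The walls of `t` and `x' v x'⁻¹` cross, so `x'` lies in `x⟨v★⟩` and is shorter than `x`.
    exfalso
    obtain ⟨htv, c, hc, d, hd, rfl⟩ := h
    have htd : gen Γ o t ∈ genSubgroup Γ o (vstar Γ v) := gen_mem (mem_vstar_comm.1 htv)
    have hm : d⁻¹ * gen Γ o t ^ (-k) * d ∈ genSubgroup Γ o (vstar Γ v) :=
      mul_mem (mul_mem (inv_mem hd) (zpow_mem htd _)) hd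
    have := hmin _ hm
    have hc' : gen Γ o t ^ k * c = c * gen Γ o t ^ k := ((commute_of_mem_star hc).zpow_left k).eq
    have e2 : x * (d⁻¹ * gen Γ o t ^ (-k) * d) = c * d := by
      rw [e, ← mul_assoc (gen Γ o t ^ k), hc']; group
    rw [e2] at this
    omega
  · right
    obtain ⟨a, b, h1, h2, h3⟩ := h
    have ha : a = 0 := by rw [← h2 1 (one_mem _), mul_one, hx']
    subst ha
    have key : ∀ y, ini t y = 0 → ini v (x⁻¹ * y) = b := by
      intro y hy
      have h5 : x⁻¹ * y = x'⁻¹ * (gen Γ o t ^ (-k) * y) := by rw [e]; group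
      rw [h5]
      refine (h1 _).resolve_left ?_
      rw [ini_zpow_self, hy, add_zero]; push_cast; exact neg_ne_zero.2 hk
    refine ⟨0, b, fun y => ?_, fun d hd => ?_, fun c hc => ?_⟩
    · rw [or_iff_not_imp_left]
      intro hy
      exact key y (ini_nstar htu hy)
    · apply ini_nstar hut
      rw [e, mul_assoc, ini_zpow_self, h2 d hd, add_zero]; exact hk
    · exact key c (ini_not_mem hc htu)

/-- The centralizer of `u` lies in `⟨u★⟩`: left multiplication by `u` moves the sectors of the wall
of `u`, so that wall cannot be nested with its translate by an element commuting with `u`. -/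
lemma mem_star_of_commute (ho : ∀ v, o v ≠ 1) {u : V} {w : W Γ o}
    (h : w * gen Γ o u = gen Γ o u * w) : w ∈ genSubgroup Γ o (vstar Γ u) := by
  rcases cross_or_nest u u w with ⟨-, c, hc, d, hd, rfl⟩ | ⟨a, b, -, h2, -⟩
  · exact mul_mem hc hd
  · exfalso
    have e1 := h2 1 (one_mem _)
    have e2 := h2 _ (gen_mem (self_mem_vstar u))
    rw [h, ini_star (gen_mem (self_mem_vstar u)), coord_self] at e2
    rw [mul_one] at e1
    rw [e1] at e2
    have : (1 : ZMod (o u)) = 0 := by simpa using e2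
    have h3 := (ZMod.natCast_eq_zero_iff 1 (o u)).1 (by simpa using this)
    exact ho u (Nat.dvd_one.1 h3)

end Walls

/-! ### Conjugating automorphisms -/

section Conjugating

variable {V : Type} {Γ : SimpleGraph V} {o : V → ℕ}

lemma eq_zpow_of_add {G : Type*} [Group G] (f : ℤ → G) (h : ∀ a b, f (a + b) = f a * f b) (k : ℤ) :
    f k = f 1 ^ k := by
  have := map_zpow (MonoidHom.mk' (fun x : Multiplicative ℤ => f x.toAdd)
    (fun a b => h a.toAdd b.toAdd)) (Multiplicative.ofAdd 1) k
  rw [← ofAdd_zsmul] at this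
  simpa using this

/-- `K` is disjoint from `u★`, and no edge joins it to the rest of the complement of `u★`; that is, `K`
is a union of connected components of `Γ∖u★`. -/
def Sep (Γ : SimpleGraph V) (u : V) (K : Set V) : Prop :=
  (∀ x ∈ K, x ∉ vstar Γ u) ∧ ∀ x ∈ K, ∀ y, Γ.Adj x y → y ∉ K → y ∈ vstar Γ u

lemma IsCompOf.sep {u : V} {K : Set V} (h : IsCompOf Γ (vstar Γ u)ᶜ K) : Sep Γ u K := by
  obtain ⟨c, rfl⟩ := h
  refine ⟨?_, ?_⟩
  · rintro _ ⟨x, -, rfl⟩; exact x.2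
  · rintro _ ⟨x, hx, rfl⟩ y hxy hy
    by_contra hyu
    refine hy ⟨⟨y, hyu⟩, ?_, rfl⟩
    rw [SimpleGraph.ConnectedComponent.mem_supp_iff] at hx ⊢
    rw [← hx]
    apply SimpleGraph.ConnectedComponent.sound
    apply SimpleGraph.Adj.reachable
    exact SimpleGraph.comap_adj.2 hxy.symm

open Classical in
/-- The endomorphism conjugating the vertices of `K` by `u ^ k`. -/
noncomputable def pcHom {u : V} {K : Set V} (hK : Sep Γ u K) (k : ℤ) : W Γ o →* W Γ o :=
  lift (fun z => if z ∈ K then MulAut.conj (gen Γ o u ^ k) (gen Γ o z) else gen Γ o z)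
    (by
      intro v
      split_ifs
      · rw [← map_pow, gen_pow_o, map_one]
      · exact gen_pow_o v)
    (by
      have key : ∀ y, y ∈ vstar Γ u →
          gen Γ o y = MulAut.conj (gen Γ o u ^ k) (gen Γ o y) := fun y hy => by
        rw [MulAut.conj_apply, ((commute_star hy).zpow_left k).eq, mul_inv_cancel_right]
      intro x y hxy
      split_ifs with hx hy hy
      · exact (gen_comm hxy).map _
      · rw [key y (hK.2 x hx y hxy hy)]
        exact (gen_comm hxy).map _
      · rw [key x (hK.2 y hy x hxy.symm hx)]
        exact (gen_comm hxy).map _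
      · exact gen_comm hxy)

lemma pcHom_mem {u : V} {K : Set V} (hK : Sep Γ u K) (k : ℤ) {z : V} (hz : z ∈ K) :
    pcHom (o := o) hK k (gen Γ o z) = gen Γ o u ^ k * gen Γ o z * (gen Γ o u ^ k)⁻¹ := by
  rw [pcHom, lift_gen, if_pos hz, MulAut.conj_apply]

lemma pcHom_not_mem {u : V} {K : Set V} (hK : Sep Γ u K) (k : ℤ) {z : V} (hz : z ∉ K) :
    pcHom (o := o) hK k (gen Γ o z) = gen Γ o z := by
  simp [pcHom, hz]

lemma Sep.not_mem {u : V} {K : Set V} (hK : Sep Γ u K) : u ∉ K :=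
  fun h => hK.1 u h (self_mem_vstar u)

lemma pcHom_add {u : V} {K : Set V} (hK : Sep Γ u K) (k j : ℤ) :
    pcHom (o := o) hK (k + j) = (pcHom hK k).comp (pcHom hK j) := by
  apply hom_ext
  intro z
  rw [MonoidHom.comp_apply]
  by_cases hz : z ∈ K
  · rw [pcHom_mem hK j hz, map_mul, map_mul, map_inv, map_zpow, pcHom_not_mem hK k hK.not_mem,
      pcHom_mem hK k hz, pcHom_mem hK _ hz, zpow_add, (Commute.refl (gen Γ o u)).zpow_zpow k j]
    group
  · rw [pcHom_not_mem hK _ hz, pcHom_not_mem hK _ hz, pcHom_not_mem hK _ hz]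

lemma pcHom_zero {u : V} {K : Set V} (hK : Sep Γ u K) :
    pcHom (o := o) hK 0 = MonoidHom.id _ := by
  apply hom_ext
  intro z
  by_cases hz : z ∈ K
  · rw [pcHom_mem hK _ hz]; simp
  · rw [pcHom_not_mem hK _ hz]; simp

/-- The automorphism conjugating the vertices of `K` by `u ^ k`. -/
noncomputable def pcAut {u : V} {K : Set V} (hK : Sep Γ u K) (k : ℤ) : MulAut (W Γ o) :=
  MonoidHom.toMulEquiv (pcHom hK k) (pcHom hK (-k))
    (by rw [← pcHom_add, neg_add_cancel, pcHom_zero])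
    (by rw [← pcHom_add, add_neg_cancel, pcHom_zero])

lemma pcAut_apply {u : V} {K : Set V} (hK : Sep Γ u K) (k : ℤ) (x : W Γ o) :
    pcAut hK k x = pcHom hK k x := rfl

lemma pcAut_eq {u : V} {K : Set V} (hK : Sep Γ u K) (k : ℤ) :
    pcAut (o := o) hK k = pcAut hK 1 ^ k := by
  apply eq_zpow_of_add (pcAut hK)
  intro a b
  apply aut_ext
  intro v
  rw [MulAut.mul_apply, pcAut_apply, pcAut_apply, pcAut_apply, pcHom_add]; rfl

lemma pcAut_mem {u : V} {K : Set V} (hK : IsCompOf Γ (vstar Γ u)ᶜ K) (k : ℤ) :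
    pcAut (o := o) hK.sep k ∈ Subgroup.closure (GStarSet Γ o) := by
  rw [pcAut_eq]
  apply Subgroup.zpow_mem
  apply Subgroup.subset_closure
  refine Or.inr (Or.inr (Or.inr ⟨u, K, hK, ?_, ?_⟩))
  · intro x hx; rw [pcAut_apply, pcHom_mem _ _ hx, zpow_one]
  · intro x hx; rw [pcAut_apply, pcHom_not_mem _ _ hx]

/-- On each edge and each vertex `θ` acts as conjugation by a group element, which may depend on the
edge or vertex. -/
def EdgeConj (θ : MulAut (W Γ o)) : Prop :=
  ∀ u v, v ∈ vstar Γ u → ∃ g : W Γ o, θ (gen Γ o u) = g * gen Γ o u * g⁻¹ ∧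
    θ (gen Γ o v) = g * gen Γ o v * g⁻¹

/-- `P` is a shortest element conjugating `θ v` to `v`. -/
def IsMinConj (θ : MulAut (W Γ o)) (v : V) (P : W Γ o) : Prop :=
  θ (gen Γ o v) = P⁻¹ * gen Γ o v * P ∧
    ∀ Q, θ (gen Γ o v) = Q⁻¹ * gen Γ o v * Q → sl P ≤ sl Q

lemma EdgeConj.exists_min {θ : MulAut (W Γ o)} (hθ : EdgeConj θ) (v : V) :
    ∃ P, IsMinConj θ v P := by
  classical
  obtain ⟨g, hg, -⟩ := hθ v v (self_mem_vstar v)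
  have hex : ∃ n, ∃ P : W Γ o, θ (gen Γ o v) = P⁻¹ * gen Γ o v * P ∧ sl P = n :=
    ⟨_, g⁻¹, by simpa using hg, rfl⟩
  obtain ⟨P, h1, h2⟩ := Nat.find_spec hex
  exact ⟨P, h1, fun Q hQ => h2 ▸ Nat.find_min' hex ⟨Q, hQ, rfl⟩⟩

lemma IsMinConj.ini_eq_zero {θ : MulAut (W Γ o)} {v : V} {P : W Γ o} (h : IsMinConj θ v P)
    {r : V} (hr : r ∈ vstar Γ v) : ini r P = 0 := by
  by_contra hne
  obtain ⟨k, y, e, -, -, -, hsl⟩ := exists_syllable hne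
  have := h.2 y (by
    rw [h.1, e, mul_inv_rev]
    have := ((commute_star (o := o) hr).zpow_right k).eq
    rw [mul_assoc, mul_assoc, mul_assoc, ← mul_assoc (gen Γ o v), this]
    group)
  omega

/-- Two elements conjugating `θ v` to `v` differ by an element of the centralizer of `v`. -/
lemma common_mem_star (ho : ∀ v, o v ≠ 1) {θ : MulAut (W Γ o)} {v : V} {P g : W Γ o}
    (h : θ (gen Γ o v) = P⁻¹ * gen Γ o v * P) (hg : θ (gen Γ o v) = g * gen Γ o v * g⁻¹) :
    P * g ∈ genSubgroup Γ o (vstar Γ v) := by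
  apply mem_star_of_commute ho
  rw [h] at hg
  calc P * g * gen Γ o v = P * (g * gen Γ o v * g⁻¹) * g := by group
    _ = gen Γ o v * (P * g) := by rw [← hg]; group

/-- Ping-pong. The assumption `hA` says that the carrier of each image wall lies in the same sector of
every other image wall, namely sector `0`, as it does for the original walls. Then `g ↦ θ g` maps
sectors to sectors (`claim`), and a nontrivial `P v` would be the inverse of some `θ g` lying in
no possible sector. -/
lemma eq_one_of_no_sep (ho : ∀ v, o v ≠ 1) {θ : MulAut (W Γ o)} (hθ : EdgeConj θ) {P : V → W Γ o}
    (hP : ∀ v, IsMinConj θ v (P v))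
    (hA : ∀ u v, v ∉ vstar Γ u → ini u (P u * (P v)⁻¹) = 0) : θ = 1 := by
  have star : ∀ (u t : V), t ∈ vstar Γ u → ∀ (k : ℤ) (y : W Γ o),
      ini u (P u * θ y) = ini u y →
      ini u (P u * θ (gen Γ o t ^ k * y)) = ini u (gen Γ o t ^ k * y) := by
    intro u t ht k y hy
    obtain ⟨g, hgu, hgt⟩ := hθ u t ht
    have hc := common_mem_star ho (hP u).1 hgu
    have htk := zpow_mem_star (o := o) ht k
    have e : P u * θ (gen Γ o t ^ k * y) =
        (P u * g) * gen Γ o t ^ k * (P u * g)⁻¹ * (P u * θ y) := by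
      rw [map_mul, map_zpow, hgt, conj_zpow]; group
    rw [e, ini_star (mul_mem (mul_mem hc htk) (inv_mem hc)), coord_conj, ini_star htk, hy]
  have claim : ∀ (g : W Γ o) (u : V), ini u (P u * θ g) = ini u g := by
    intro g
    induction hn : sl g using Nat.strong_induction_on generalizing g with
    | _ n ih =>
    subst hn
    intro u
    by_cases hg : g = 1
    · subst hg; rw [map_one, mul_one, (hP u).ini_eq_zero (self_mem_vstar u), ini_one]
    obtain ⟨t, ht⟩ := exists_ini hg
    obtain ⟨k, y, e, -, -, -, hsl⟩ := exists_syllable ht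
    have ihy := ih (sl y) (by omega) y rfl
    by_cases htu : t ∈ vstar Γ u
    · rw [e]; exact star u t htu k y (ihy u)
    have hut : u ∉ vstar Γ t := by rwa [mem_vstar_comm]
    have ht' : ini t (P t * θ g) ≠ 0 := by
      rw [e, star t t (self_mem_vstar t) k y (ihy t), ← e]; exact ht
    rw [ini_nstar hut ht]
    rcases cross_or_nest t u (P t * (P u)⁻¹) with ⟨h, -⟩ | ⟨a, b, h1, h2, h3⟩
    · exact absurd h hut
    have ha : a = 0 := by rw [← h2 1 (one_mem _), mul_one, hA t u hut]
    have hb : b = 0 := by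
      rw [← h3 1 (one_mem _), mul_one, mul_inv_rev, inv_inv, hA u t htu]
    subst ha hb
    have := (h1 (P t * θ g)).resolve_left ht'
    rwa [mul_inv_rev, inv_inv, mul_assoc, inv_mul_cancel_left] at this
  have hone : ∀ v, P v = 1 := by
    intro v
    by_contra hne
    have hg : θ.symm (P v)⁻¹ ≠ 1 := by simpa using hne
    obtain ⟨t, ht⟩ := exists_ini hg
    rw [← claim, MulEquiv.apply_symm_apply] at ht
    by_cases htv : t ∈ vstar Γ v
    · obtain ⟨g, hgv, hgt⟩ := hθ v t htv
      have hd := common_mem_star ho (hP v).1 hgv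
      have hc := common_mem_star ho (hP t).1 hgt
      have e1 : P t = (P t * g) * ((P v * g)⁻¹ * P v) := by group
      have e2 : P t * (P v)⁻¹ = (P t * g) * (P v * g)⁻¹ := by group
      have h0 := (hP t).ini_eq_zero (self_mem_vstar t)
      rw [e1, ini_star hc, ini_mul_of_reduced (fun r hr => (hP v).ini_eq_zero hr) (inv_mem hd) htv,
        ← ini_star hc, ← e2] at h0
      exact ht h0
    · exact ht (hA t v (by rwa [mem_vstar_comm]))
  apply aut_ext
  intro v
  rw [(hP v).1, hone v]; simp

lemma EdgeConj.mul {θ σ : MulAut (W Γ o)} (hθ : EdgeConj θ) (hσ : EdgeConj σ) :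
    EdgeConj (θ * σ) := by
  intro u v huv
  obtain ⟨g, h1, h2⟩ := hθ u v huv
  obtain ⟨h, h3, h4⟩ := hσ u v huv
  refine ⟨θ h * g, ?_, ?_⟩
  · rw [MulAut.mul_apply, h3, map_mul, map_mul, map_inv, h1]; group
  · rw [MulAut.mul_apply, h4, map_mul, map_mul, map_inv, h2]; group

lemma pcAut_edgeConj {u : V} {K : Set V} (hK : Sep Γ u K) (k : ℤ) :
    EdgeConj (pcAut (o := o) hK k) := by
  have key : ∀ y, y ∈ vstar Γ u →
      gen Γ o y = gen Γ o u ^ k * gen Γ o y * (gen Γ o u ^ k)⁻¹ := fun y hy => by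
    rw [((commute_star hy).zpow_left k).eq, mul_inv_cancel_right]
  intro a b hab
  simp only [pcAut_apply]
  rcases hab with rfl | hab
  · by_cases ha : b ∈ K
    · exact ⟨_, pcHom_mem hK k ha, pcHom_mem hK k ha⟩
    · exact ⟨1, by simp [pcHom_not_mem hK k ha]⟩
  have hab : Γ.Adj a b := hab
  by_cases ha : a ∈ K <;> by_cases hb : b ∈ K
  · exact ⟨_, pcHom_mem hK k ha, pcHom_mem hK k hb⟩
  · exact ⟨_, pcHom_mem hK k ha, by rw [pcHom_not_mem hK k hb]; exact key b (hK.2 a ha b hab hb)⟩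
  · exact ⟨_, by rw [pcHom_not_mem hK k ha]; exact key a (hK.2 b hb a hab.symm ha),
      pcHom_mem hK k hb⟩
  · exact ⟨1, by simp [pcHom_not_mem hK k ha], by simp [pcHom_not_mem hK k hb]⟩

/-- The sector of the image wall of `u` in which the carrier of the image wall of `v` lies is
constant along the edges outside `u★`, because the carriers at the two ends of an edge meet. -/
lemma ini_const (ho : ∀ v, o v ≠ 1) {θ : MulAut (W Γ o)} (hθ : EdgeConj θ) {P : V → W Γ o}
    (hP : ∀ v, IsMinConj θ v (P v)) {u v w : V} (hv : v ∉ vstar Γ u) (hw : w ∉ vstar Γ u)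
    (h : Γ.Adj v w) : ini u (P u * (P v)⁻¹) = ini u (P u * (P w)⁻¹) := by
  obtain ⟨g, h1, h2⟩ := hθ v w (adj_mem_vstar h)
  have hd := common_mem_star ho (hP v).1 h1
  have hd' := common_mem_star ho (hP w).1 h2
  rcases cross_or_nest u v (P u * (P v)⁻¹) with ⟨h, -⟩ | ⟨a, -, -, ha, -⟩
  · exact absurd h hv
  rcases cross_or_nest u w (P u * (P w)⁻¹) with ⟨h, -⟩ | ⟨a', -, -, ha', -⟩
  · exact absurd h hw
  have e1 := ha _ hd
  have e2 := ha' _ hd'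
  have e3 : P u * (P v)⁻¹ * (P v * g) = P u * (P w)⁻¹ * (P w * g) := by group
  rw [e3, e2] at e1
  have e4 := ha 1 (one_mem _)
  have e5 := ha' 1 (one_mem _)
  rw [mul_one] at e4 e5
  rw [e4, e5, e1]

lemma ini_const_walk (ho : ∀ v, o v ≠ 1) {θ : MulAut (W Γ o)} (hθ : EdgeConj θ) {P : V → W Γ o}
    (hP : ∀ v, IsMinConj θ v (P v)) {u : V} {a b : ((vstar Γ u)ᶜ : Set V)}
    (p : (SimpleGraph.induce (vstar Γ u)ᶜ Γ).Walk a b) :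
    ini u (P u * (P a.1)⁻¹) = ini u (P u * (P b.1)⁻¹) := by
  induction p with
  | nil => rfl
  | @cons a c b h p ih =>
    rw [ini_const ho hθ hP a.prop c.prop (SimpleGraph.comap_adj.1 h)]
    exact ih

/-- Automorphisms which conjugate every edge are products of partial conjugations. If `θ` is not the
identity, some image wall `v` lies in a nonzero sector `k` of some image wall `u`; precomposing with
the partial conjugation by `u ^ (-k)` of the component of `v` in `Γ∖u★` lowers the sum of the lengths
of the conjugators. -/
theorem EdgeConj.mem_closure [Fintype V] (ho : ∀ v, o v ≠ 1) {θ : MulAut (W Γ o)}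
    (hθ : EdgeConj θ) : θ ∈ Subgroup.closure (GStarSet Γ o) := by
  choose P hP using hθ.exists_min
  induction hn : ∑ v, sl (P v) using Nat.strong_induction_on generalizing θ P with
  | _ n ih =>
  subst hn
  by_cases hA : ∀ u v, v ∉ vstar Γ u → ini u (P u * (P v)⁻¹) = 0
  · rw [eq_one_of_no_sep ho hθ hP hA]; exact one_mem _
  push Not at hA
  obtain ⟨u, v, hv, hne⟩ := hA
  obtain ⟨k, hk⟩ := ZMod.intCast_surjective (ini u (P u * (P v)⁻¹))
  set c := (SimpleGraph.induce (vstar Γ u)ᶜ Γ).connectedComponentMk ⟨v, hv⟩ with hc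
  have hK : IsCompOf Γ (vstar Γ u)ᶜ (Subtype.val '' c.supp) := ⟨c, rfl⟩
  set K : Set V := Subtype.val '' c.supp
  have hvK : v ∈ K := ⟨⟨v, hv⟩, rfl, rfl⟩
  have hconst : ∀ z ∈ K, ini u (P u * (P z)⁻¹) = k := by
    rintro _ ⟨z, hz, rfl⟩
    rw [SimpleGraph.ConnectedComponent.mem_supp_iff, hc, SimpleGraph.ConnectedComponent.eq] at hz
    obtain ⟨p⟩ := hz
    rw [hk]
    exact ini_const_walk ho hθ hP p
  set σ : MulAut (W Γ o) := pcAut hK.sep (-k) with hσ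
  have hθ' : EdgeConj (θ * σ) := hθ.mul (pcAut_edgeConj _ _)
  have hlt : ∀ z ∈ K, ∃ Q, (θ * σ) (gen Γ o z) = Q⁻¹ * gen Γ o z * Q ∧ sl Q < sl (P z) := by
    intro z hz
    have hini := hconst z hz
    have hne' : ini u (P u * (P z)⁻¹) ≠ 0 := by rwa [hini, hk]
    obtain ⟨j, y, e, -, hj, -, hsl⟩ := exists_syllable hne'
    have hjk : gen Γ o u ^ j = gen Γ o u ^ k := by
      rw [← mul_inv_eq_one, ← zpow_neg, ← zpow_add]
      apply gen_zpow_eq_one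
      push_cast; rw [hj, hini]; ring
    refine ⟨y⁻¹ * P u, ?_, ?_⟩
    · have e2 : y = gen Γ o u ^ (-k) * (P u * (P z)⁻¹) := by rw [e, hjk]; group
      rw [MulAut.mul_apply, hσ, pcAut_apply, pcHom_mem _ _ hz, map_mul, map_mul, map_inv, map_zpow,
        (hP u).1, (hP z).1, e2]
      have := conj_zpow (i := -k) (a := (P u)⁻¹) (b := gen Γ o u)
      rw [inv_inv] at this
      rw [this]; group
    · have h1 := sl_inv_mul_le y (P u)
      have h2 := sl_inv_mul (P u * (P z)⁻¹) (P u) (fun t => by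
        by_cases ht : t ∈ vstar Γ u
        · exact Or.inr ((hP u).ini_eq_zero ht)
        · exact Or.inl (ini_nstar ht hne'))
      have e3 : (P u * (P z)⁻¹)⁻¹ * P u = P z := by group
      rw [e3] at h2
      omega
  have heq : ∀ z ∉ K, (θ * σ) (gen Γ o z) = θ (gen Γ o z) := fun z hz => by
    rw [MulAut.mul_apply, hσ, pcAut_apply, pcHom_not_mem _ _ hz]
  choose P' hP' using hθ'.exists_min
  have hle : ∀ z, sl (P' z) ≤ sl (P z) := by
    intro z
    by_cases hz : z ∈ K
    · obtain ⟨Q, h1, h2⟩ := hlt z hz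
      exact ((hP' z).2 Q h1).trans h2.le
    · exact (hP' z).2 _ (by rw [heq z hz, (hP z).1])
  have hsum : ∑ z, sl (P' z) < ∑ z, sl (P z) := by
    apply Finset.sum_lt_sum (fun z _ => hle z)
    obtain ⟨Q, h1, h2⟩ := hlt v hvK
    exact ⟨v, Finset.mem_univ _, ((hP' v).2 Q h1).trans_lt h2⟩
  have := ih _ hsum hθ' P' hP' rfl
  have h3 := Subgroup.mul_mem _ this (inv_mem (pcAut_mem (o := o) hK (-k)))
  rwa [mul_assoc, mul_inv_cancel, mul_one] at h3

end Conjugating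

/-! ### Transvections and factor automorphisms -/

section Elementary

variable {V : Type} {Γ : SimpleGraph V} {o : V → ℕ}

open scoped Pointwise

/-- The stabilizer of all the subgroups generated by maximal cliques. -/
def stabCliques (Γ : SimpleGraph V) (o : V → ℕ) : Subgroup (MulAut (W Γ o)) :=
  ⨅ (Δ : Set V) (_ : IsMaxClique Γ Δ), MulAction.stabilizer (MulAut (W Γ o)) (genSubgroup Γ o Δ)

lemma mem_stabCliques {θ : MulAut (W Γ o)} : θ ∈ stabCliques Γ o ↔
    ∀ Δ, IsMaxClique Γ Δ → θ • genSubgroup Γ o Δ = genSubgroup Γ o Δ := by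
  simp [stabCliques, Subgroup.mem_iInf]

lemma smul_eq_map (θ : MulAut (W Γ o)) (H : Subgroup (W Γ o)) :
    θ • H = Subgroup.map (MulEquiv.toMonoidHom θ) H := rfl

lemma smul_genSubgroup_le {θ : MulAut (W Γ o)} {S T : Set V}
    (h : ∀ v ∈ S, θ (gen Γ o v) ∈ genSubgroup Γ o T) :
    θ • genSubgroup Γ o S ≤ genSubgroup Γ o T := by
  rw [smul_eq_map, Subgroup.map_le_iff_le_comap, genSubgroup, Subgroup.closure_le]
  rintro _ ⟨v, hv, rfl⟩
  exact h v hv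

lemma smul_genSubgroup_eq {θ : MulAut (W Γ o)} {S : Set V}
    (h : ∀ v ∈ S, θ (gen Γ o v) ∈ genSubgroup Γ o S)
    (h' : ∀ v ∈ S, θ⁻¹ (gen Γ o v) ∈ genSubgroup Γ o S) :
    θ • genSubgroup Γ o S = genSubgroup Γ o S := by
  apply le_antisymm (smul_genSubgroup_le h)
  have := Subgroup.pointwise_smul_le_pointwise_smul_iff (a := θ) |>.2 (smul_genSubgroup_le h')
  rwa [smul_inv_smul] at this

/-- The automorphisms generated by `𝒢★` which stabilize all the maximal clique subgroups. -/
def cliqueGStar (Γ : SimpleGraph V) (o : V → ℕ) : Subgroup (MulAut (W Γ o)) :=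
  Subgroup.closure (GStarSet Γ o) ⊓ stabCliques Γ o

lemma vles.adj {x y : V} (h : vles Γ x y) (hne : x ≠ y) : Γ.Adj x y := by
  rcases h (self_mem_vstar x) with rfl | h
  · exact absurd rfl hne
  · exact SimpleGraph.Adj.symm h

/-- A vertex whose star contains `x★` lies in every maximal clique through `x`. -/
lemma vles.mem_clique {x y : V} (h : vles Γ x y) {Δ : Set V} (hΔ : IsMaxClique Γ Δ) (hx : x ∈ Δ) :
    y ∈ Δ := by
  have hc : Γ.IsClique (insert y Δ) := by
    rw [SimpleGraph.isClique_insert]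
    refine ⟨hΔ.1, fun b hb hne => ?_⟩
    have hbx : b ∈ vstar Γ x := by
      by_cases hbx : b = x
      · exact Or.inl hbx
      · exact adj_mem_vstar (hΔ.1 hx hb (Ne.symm hbx))
    exact (h hbx).resolve_left (Ne.symm hne)
  rw [← hΔ.2 _ hc (Set.subset_insert y Δ)]
  exact Set.mem_insert y Δ

open Classical in
/-- The endomorphism `x ↦ x y ^ m`. -/
noncomputable def tvHom {x y : V} (hs : vles Γ x y) (hne : x ≠ y) (m : ℤ)
    (hd : (o y : ℤ) ∣ m * o x) : W Γ o →* W Γ o :=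
  lift (fun z => if z = x then gen Γ o x * gen Γ o y ^ m else gen Γ o z)
    (by
      intro v
      split_ifs with h
      · subst h
        rw [((gen_comm (hs.adj hne)).zpow_right m).mul_pow, gen_pow_o, one_mul, ← zpow_natCast,
          ← zpow_mul]
        exact gen_zpow_eq_one ((ZMod.intCast_zmod_eq_zero_iff_dvd _ _).2 hd)
      · exact gen_pow_o v)
    (by
      have key : ∀ z, Γ.Adj x z → Commute (gen Γ o x * gen Γ o y ^ m) (gen Γ o z) := fun z hz =>
        (gen_comm hz).mul_left ((commute_star (hs (adj_mem_vstar hz))).zpow_left m)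
      intro u v huv
      split_ifs with h1 h2 h2
      · exact Commute.refl _
      · subst h1; exact key v huv
      · subst h2; exact (key u huv.symm).symm
      · exact gen_comm huv)

section
variable {x y : V} (hs : vles Γ x y) (hne : x ≠ y)

lemma tvHom_self (m : ℤ) (hd : (o y : ℤ) ∣ m * o x) :
    tvHom hs hne m hd (gen Γ o x) = gen Γ o x * gen Γ o y ^ m := by
  rw [tvHom, lift_gen, if_pos rfl]

lemma tvHom_ne (m : ℤ) (hd : (o y : ℤ) ∣ m * o x) {z : V} (hz : z ≠ x) :
    tvHom hs hne m hd (gen Γ o z) = gen Γ o z := by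
  rw [tvHom, lift_gen, if_neg hz]

lemma tvHom_add (m k : ℤ) (hm : (o y : ℤ) ∣ m * o x) (hk : (o y : ℤ) ∣ k * o x)
    (h : (o y : ℤ) ∣ (m + k) * o x) :
    tvHom hs hne (m + k) h = (tvHom hs hne m hm).comp (tvHom hs hne k hk) := by
  apply hom_ext
  intro z
  rw [MonoidHom.comp_apply]
  by_cases hz : z = x
  · subst hz
    rw [tvHom_self, tvHom_self, map_mul, map_zpow, tvHom_self, tvHom_ne hs hne _ _ hne.symm,
      zpow_add, mul_assoc]
  · rw [tvHom_ne hs hne _ _ hz, tvHom_ne hs hne _ _ hz, tvHom_ne hs hne _ _ hz]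

lemma tvHom_zero (m : ℤ) (hm0 : m = 0) (hm : (o y : ℤ) ∣ m * o x) :
    tvHom hs hne m hm = MonoidHom.id (W Γ o) := by
  subst hm0
  apply hom_ext
  intro z
  by_cases hz : z = x
  · subst hz; rw [tvHom_self]; simp
  · rw [tvHom_ne hs hne _ _ hz]; simp

/-- The automorphism `x ↦ x y ^ m`. -/
noncomputable def tvAut (m : ℤ) (hd : (o y : ℤ) ∣ m * o x) : MulAut (W Γ o) :=
  have hd' : (o y : ℤ) ∣ (-m) * o x := by rw [neg_mul]; exact hd.neg_right
  MonoidHom.toMulEquiv (tvHom hs hne m hd) (tvHom hs hne (-m) hd')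
    (by rw [← tvHom_add hs hne (-m) m hd' hd (by simp), tvHom_zero hs hne _ (by simp)])
    (by rw [← tvHom_add hs hne m (-m) hd hd' (by simp), tvHom_zero hs hne _ (by simp)])

lemma tvAut_apply (m : ℤ) (hd : (o y : ℤ) ∣ m * o x) (g : W Γ o) :
    tvAut hs hne m hd g = tvHom hs hne m hd g := rfl

/-- The exponent sum at `y` of the image of the relator `x ^ o x` shows which transvections are well
defined. -/
lemma dvd_of_extends {q : ℕ} (h : TransvectionExtends Γ o x y q) (hne : x ≠ y) :
    (o y : ℤ) ∣ q * o x := by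
  obtain ⟨e, he, -⟩ := h
  have h1 : coord y (e (gen Γ o x ^ o x)) = 0 := by rw [gen_pow_o, map_one, coord_one]
  rw [map_pow, he, coord_pow, coord_mul, coord_ne hne, coord_pow, coord_self, zero_add,
    mul_one] at h1
  rw [← ZMod.intCast_zmod_eq_zero_iff_dvd]
  push_cast
  rw [mul_comm]; exact h1

/-- The exponents `m` allowed in `x ↦ x y ^ m` are the multiples of the least positive one, so these maps
are powers of one elementary ★-transvection. -/
lemma tvAut_mem_closure (m : ℤ) (hd : (o y : ℤ) ∣ m * o x) :
    tvAut hs hne m hd ∈ Subgroup.closure (GStarSet Γ o) := by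
  classical
  by_cases hm : m = 0
  · have : tvAut hs hne m hd = (1 : MulAut (W Γ o)) := by
      apply aut_ext
      intro v
      rw [tvAut_apply, tvHom_zero hs hne m hm]; rfl
    rw [this]; exact one_mem _
  have hex : ∃ q : ℕ, 1 ≤ q ∧ (o y : ℤ) ∣ q * o x := by
    refine ⟨m.natAbs, Int.natAbs_pos.2 hm, ?_⟩
    rcases Int.natAbs_eq m with h | h
    · rwa [← h]
    · rw [h, neg_mul] at hd; exact (dvd_neg.1 hd)
  obtain ⟨hQ1, hQ⟩ := Nat.find_spec hex
  have hmin := fun (q : ℕ) (hq : 1 ≤ q ∧ (o y : ℤ) ∣ q * o x) => Nat.find_min' hex hq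
  set Q := Nat.find hex
  have hQm : (Q : ℤ) ∣ m := by
    have hQpos : (0 : ℤ) < Q := by exact_mod_cast hQ1
    rw [Int.dvd_iff_emod_eq_zero]
    by_contra h0
    have h1 := Int.emod_nonneg m hQpos.ne'
    have h2 := Int.emod_lt_of_pos m hQpos
    have h3 : (o y : ℤ) ∣ (m % Q) * o x := by
      rw [Int.emod_def, sub_mul]
      exact hd.sub (by rw [mul_right_comm]; exact hQ.mul_right _)
    have := hmin (m % Q).toNat ⟨by omega, by rwa [Int.toNat_of_nonneg h1]⟩
    omega
  obtain ⟨j, rfl⟩ := hQm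
  have hj : ∀ j : ℤ, (o y : ℤ) ∣ (Q * j) * o x := fun j => by
    rw [mul_right_comm]; exact hQ.mul_right _
  have := eq_zpow_of_add (fun j : ℤ => tvAut (o := o) hs hne (Q * j) (hj j)) (fun a b => by
    apply aut_ext
    intro v
    rw [MulAut.mul_apply, tvAut_apply, tvAut_apply, tvAut_apply, ← MonoidHom.comp_apply,
      ← tvHom_add hs hne (Q * a) (Q * b) (hj a) (hj b) (by rw [← mul_add]; exact hj _)]
    simp only [mul_add]) j
  rw [this]
  apply Subgroup.zpow_mem
  apply Subgroup.subset_closure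
  refine Or.inr (Or.inr (Or.inl ⟨x, y, hs.adj hne, hne, Q, hQ1, ?_, ?_, ?_, ?_⟩))
  · refine ⟨tvHom hs hne (Q * 1) (hj 1), ?_, fun z hz => tvHom_ne hs hne _ _ hz⟩
    rw [tvHom_self, mul_one, zpow_natCast]
  · intro q' h1 h2
    exact hmin q' ⟨h1, dvd_of_extends h2 hne⟩
  · rw [tvAut_apply, tvHom_self, mul_one, zpow_natCast]
  · intro z hz
    exact tvHom_ne hs hne _ (hj 1) hz

lemma tvHom_mem_clique (m : ℤ) (hd : (o y : ℤ) ∣ m * o x) {Δ : Set V} (hΔ : IsMaxClique Γ Δ) {v : V}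
    (hv : v ∈ Δ) : tvHom hs hne m hd (gen Γ o v) ∈ genSubgroup Γ o Δ := by
  by_cases h : v = x
  · subst h
    rw [tvHom_self]
    exact mul_mem (gen_mem hv) (Subgroup.zpow_mem _ (gen_mem (hs.mem_clique hΔ hv)) _)
  · rw [tvHom_ne hs hne _ _ h]; exact gen_mem hv

end

/-- Transvections `x ↦ x y ^ m` with `x★ ⊆ y★`, under the condition on `m` that makes them well
defined. -/
lemma exists_tv {x y : V} (hs : vles Γ x y) (hne : x ≠ y) (m : ℤ)
    (hd : (o y : ℤ) ∣ m * o x) : ∃ τ ∈ cliqueGStar Γ o,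
    τ (gen Γ o x) = gen Γ o x * gen Γ o y ^ m ∧ ∀ z, z ≠ x → τ (gen Γ o z) = gen Γ o z := by
  refine ⟨tvAut hs hne m hd, ⟨tvAut_mem_closure hs hne m hd, mem_stabCliques.2 fun Δ hΔ => ?_⟩,
    tvHom_self hs hne m hd, fun z hz => tvHom_ne hs hne m hd hz⟩
  apply smul_genSubgroup_eq
  · intro v hv
    exact tvHom_mem_clique hs hne m hd hΔ hv
  · intro v hv
    exact tvHom_mem_clique hs hne (-m) (by rw [neg_mul]; exact hd.neg_right) hΔ hv

open Classical in
/-- The endomorphism `v ↦ v ^ m`. -/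
noncomputable def faHom (v : V) (m : ℤ) : W Γ o →* W Γ o :=
  lift (fun z => if z = v then gen Γ o v ^ m else gen Γ o z)
    (by
      intro w
      split_ifs with h
      · subst h
        rw [← zpow_natCast, ← zpow_mul, mul_comm, zpow_mul, zpow_natCast, gen_pow_o, one_zpow]
      · exact gen_pow_o w)
    (by
      intro a b hab
      split_ifs with h1 h2 h2
      · exact Commute.refl _
      · subst h1; exact (gen_comm hab).zpow_left m
      · subst h2; exact (gen_comm hab).zpow_right m
      · exact gen_comm hab)

lemma faHom_self (v : V) (m : ℤ) : faHom v m (gen Γ o v) = gen Γ o v ^ m := by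
  rw [faHom, lift_gen, if_pos rfl]

lemma faHom_ne {v z : V} (m : ℤ) (hz : z ≠ v) : faHom v m (gen Γ o z) = gen Γ o z := by
  rw [faHom, lift_gen, if_neg hz]

lemma faHom_comp {v : V} {m k : ℤ} (h : (o v : ℤ) ∣ m * k - 1) :
    (faHom (Γ := Γ) (o := o) v m).comp (faHom v k) = MonoidHom.id _ := by
  apply hom_ext
  intro z
  rw [MonoidHom.comp_apply]
  by_cases hz : z = v
  · subst hz
    rw [faHom_self, map_zpow, faHom_self, ← zpow_mul, MonoidHom.id_apply, ← sub_add_cancel (m * k) 1,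
      zpow_add, gen_zpow_eq_one ((ZMod.intCast_zmod_eq_zero_iff_dvd _ _).2 h), one_mul, zpow_one]
  · rw [faHom_ne _ hz, faHom_ne _ hz]; rfl

lemma faHom_mem {v w : V} (m : ℤ) {Δ : Set V} (hw : w ∈ Δ) :
    faHom v m (gen Γ o w) ∈ genSubgroup Γ o Δ := by
  by_cases h : w = v
  · subst h; rw [faHom_self]; exact Subgroup.zpow_mem _ (gen_mem hw) _
  · rw [faHom_ne _ h]; exact gen_mem hw

/-- Factor automorphisms `v ↦ v ^ m`, where `k` is an inverse of `m` modulo `o v`; this includes the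
identity. -/
lemma exists_fa {v : V} {m k : ℤ} (h : (o v : ℤ) ∣ m * k - 1) : ∃ τ ∈ cliqueGStar Γ o,
    τ (gen Γ o v) = gen Γ o v ^ m ∧ ∀ z, z ≠ v → τ (gen Γ o z) = gen Γ o z := by
  set τ : MulAut (W Γ o) := MonoidHom.toMulEquiv (faHom v m) (faHom v k)
    (faHom_comp (by rwa [mul_comm])) (faHom_comp h)
  have h1 : τ (gen Γ o v) = gen Γ o v ^ m := faHom_self v m
  have h2 : ∀ z, z ≠ v → τ (gen Γ o z) = gen Γ o z := fun z hz => faHom_ne m hz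
  refine ⟨τ, ⟨?_, mem_stabCliques.2 fun Δ hΔ => ?_⟩, h1, h2⟩
  · by_cases hm : m = 1
    · have : τ = 1 := by
        apply aut_ext
        intro z
        by_cases hz : z = v
        · subst hz; rw [h1, hm, zpow_one]; rfl
        · rw [h2 z hz]; rfl
      rw [this]; exact one_mem _
    apply Subgroup.subset_closure
    refine Or.inr (Or.inl ⟨v, m, ?_, h1, h2⟩)
    by_cases hv : o v = 0
    · left
      rw [hv, Nat.cast_zero, zero_dvd_iff, sub_eq_zero] at h
      exact ⟨hv, (Int.eq_one_or_neg_one_of_mul_eq_one h).resolve_left hm⟩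
    · right
      refine ⟨hv, hm, ?_⟩
      obtain ⟨j, hj⟩ := h
      rw [← Int.isCoprime_iff_gcd_eq_one]
      exact ⟨k, -j, by linarith⟩
  · apply smul_genSubgroup_eq
    · intro w hw; exact faHom_mem m hw
    · intro w hw; exact faHom_mem k hw

end Elementary

/-! ### Elimination on the abelianization -/

section Elimination

variable {V : Type} {Γ : SimpleGraph V} {o : V → ℕ}

open scoped Pointwise

/-- `c` consists of integers representing the exponent sums of `g`. The exponent sums at different
vertices live modulo different numbers, so integer representatives are used for linear algebra. -/
def Lifts (c : V → ℤ) (g : W Γ o) : Prop := ∀ y, (c y : ZMod (o y)) = coord y g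

lemma exists_lifts (g : W Γ o) : ∃ c, Lifts c g :=
  ⟨fun y => (coord y g).cast, fun y => ZMod.intCast_zmod_cast _⟩

/-- The relator `y ^ o y` restricts the entries of the matrix of `θ` on the abelianization. -/
lemma o_mul_coord (θ : MulAut (W Γ o)) (v y : V) :
    (o y : ZMod (o v)) * coord v (θ (gen Γ o y)) = 0 := by
  rw [← coord_pow, ← map_pow, gen_pow_o, map_one, coord_one]

/-- The matrix of `θ` on the abelianization, with entries `coord v (θ y)`. -/
lemma expand [Fintype V] (θ : MulAut (W Γ o)) (v : V) {g : W Γ o} {c : V → ℤ} (hc : Lifts c g) :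
    coord v (θ g) = ∑ y, (c y : ZMod (o v)) * coord v (θ (gen Γ o y)) := by
  classical
  have indep : ∀ (g : W Γ o) (c c' : V → ℤ), Lifts c g → Lifts c' g →
      ∑ y, (c y : ZMod (o v)) * coord v (θ (gen Γ o y)) =
        ∑ y, (c' y : ZMod (o v)) * coord v (θ (gen Γ o y)) := by
    intro g c c' h h'
    apply Finset.sum_congr rfl
    intro y _
    have : ((c y - c' y : ℤ) : ZMod (o y)) = 0 := by
      push_cast; rw [h, h', sub_self]
    obtain ⟨j, hj⟩ := (ZMod.intCast_zmod_eq_zero_iff_dvd _ _).1 this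
    rw [← sub_eq_zero, ← sub_mul, ← Int.cast_sub, hj]
    push_cast
    rw [mul_right_comm, o_mul_coord, zero_mul]
  suffices h : ∃ c, Lifts c g ∧
      coord v (θ g) = ∑ y, (c y : ZMod (o v)) * coord v (θ (gen Γ o y)) by
    obtain ⟨c', h1, h2⟩ := h
    rw [h2]; exact indep g _ _ h1 hc
  have hg : g ∈ Subgroup.closure (Set.range (gen Γ o)) := by rw [closure_gen]; trivial
  clear hc
  induction hg using Subgroup.closure_induction with
  | mem x hx =>
    obtain ⟨w, rfl⟩ := hx
    refine ⟨fun y => if y = w then 1 else 0, fun y => ?_, by simp⟩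
    by_cases h : y = w
    · subst h; simp
    · simp [h, coord_ne (Ne.symm h)]
  | one => exact ⟨0, fun y => by simp, by simp⟩
  | mul x y _ _ hx hy =>
    obtain ⟨c, h1, h2⟩ := hx
    obtain ⟨d, h3, h4⟩ := hy
    refine ⟨c + d, fun y => by simp [coord_mul, h1 y, h3 y], ?_⟩
    rw [map_mul, coord_mul, h2, h4, ← Finset.sum_add_distrib]
    apply Finset.sum_congr rfl; intros; simp [add_mul]
  | inv x _ hx =>
    obtain ⟨c, h1, h2⟩ := hx
    refine ⟨-c, fun y => by simp [coord_inv, h1 y], ?_⟩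
    rw [map_inv, coord_inv, h2, ← Finset.sum_neg_distrib]
    apply Finset.sum_congr rfl; intros; simp

/-- The exponent sums of `θ g` depend only on those of `g`, as `θ` acts on the abelianization. -/
lemma coord_congr [Fintype V] (θ : MulAut (W Γ o)) {g h : W Γ o} (e : ∀ y, coord y g = coord y h)
    (v : V) : coord v (θ g) = coord v (θ h) := by
  obtain ⟨c, hc⟩ := exists_lifts g
  rw [expand θ v hc, expand θ v (fun y => (hc y).trans (e y))]

open Classical in
/-- The effect of a transvection on exponent sums is an elementary row operation. -/
lemma Lifts.tv [Fintype V] {c : V → ℤ} {g : W Γ o} (hc : Lifts c g) {τ : MulAut (W Γ o)} {x y : V}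
    {m : ℤ} (h1 : τ (gen Γ o x) = gen Γ o x * gen Γ o y ^ m)
    (h2 : ∀ z, z ≠ x → τ (gen Γ o z) = gen Γ o z) :
    Lifts (Function.update c y (c y + m * c x)) (τ g) := by
  intro v
  have e0 : coord v g = coord v ((1 : MulAut (W Γ o)) g) := rfl
  have : coord v (τ g) = coord v g + c x * (m * coord v (gen Γ o y)) := by
    rw [expand τ v hc, e0, expand 1 v hc, ← sub_eq_iff_eq_add', ← Finset.sum_sub_distrib,
      Finset.sum_eq_single x]
    · rw [h1, coord_mul, coord_zpow, MulAut.one_apply]; ring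
    · intro b _ hb; rw [h2 b hb]; exact sub_self _
    · simp
  rw [this, ← hc v]
  by_cases hv : v = y
  · subst hv; simp; ring
  · rw [Function.update_of_ne hv, coord_ne (Ne.symm hv)]; simp

open Classical in
lemma Lifts.fa [Fintype V] {c : V → ℤ} {g : W Γ o} (hc : Lifts c g) {τ : MulAut (W Γ o)} {x : V}
    {m : ℤ} (h1 : τ (gen Γ o x) = gen Γ o x ^ m) (h2 : ∀ z, z ≠ x → τ (gen Γ o z) = gen Γ o z) :
    Lifts (Function.update c x (m * c x)) (τ g) := by
  have := hc.tv (τ := τ) (x := x) (y := x) (m := m - 1) (by rw [h1, zpow_sub_one]; group) h2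
  convert this using 2
  ring

/-- `θ` maps the subgroup `⟨Δ⟩` to a conjugate of `⟨Θ⟩`. -/
def CliqueTo (θ : MulAut (W Γ o)) (Δ Θ : Set V) : Prop :=
  ∃ g : W Γ o, θ • genSubgroup Γ o Δ = MulAut.conj g • genSubgroup Γ o Θ

lemma smul_conj_smul (θ : MulAut (W Γ o)) (g : W Γ o) (H : Subgroup (W Γ o)) :
    θ • MulAut.conj g • H = MulAut.conj (θ g) • θ • H := by
  rw [smul_smul, smul_smul]
  congr 1
  ext x
  simp

lemma CliqueTo.mul {σ τ : MulAut (W Γ o)} {Δ Θ Λ : Set V} (h1 : CliqueTo τ Θ Λ)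
    (h2 : CliqueTo σ Δ Θ) : CliqueTo (τ * σ) Δ Λ := by
  obtain ⟨g, hg⟩ := h1
  obtain ⟨h, hh⟩ := h2
  refine ⟨τ h * g, ?_⟩
  rw [mul_smul, hh, smul_conj_smul, hg, map_mul, mul_smul]

lemma CliqueTo.inv {θ : MulAut (W Γ o)} {Δ Θ : Set V} (h : CliqueTo θ Δ Θ) :
    CliqueTo θ⁻¹ Θ Δ := by
  obtain ⟨g, hg⟩ := h
  refine ⟨θ⁻¹ g⁻¹, ?_⟩
  have : genSubgroup Γ o Θ = MulAut.conj g⁻¹ • θ • genSubgroup Γ o Δ := by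
    rw [hg, smul_smul, ← map_mul, inv_mul_cancel, map_one, one_smul]
  rw [this, smul_conj_smul, inv_smul_smul]

/-- `θ` maps the subgroup of each maximal clique to a conjugate of itself. -/
def FixCliques (θ : MulAut (W Γ o)) : Prop := ∀ Δ, IsMaxClique Γ Δ → CliqueTo θ Δ Δ

lemma FixCliques.mul {θ σ : MulAut (W Γ o)} (h1 : FixCliques θ) (h2 : FixCliques σ) :
    FixCliques (θ * σ) := fun Δ hΔ => (h1 Δ hΔ).mul (h2 Δ hΔ)

lemma FixCliques.inv {θ : MulAut (W Γ o)} (h1 : FixCliques θ) : FixCliques θ⁻¹ :=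
  fun Δ hΔ => (h1 Δ hΔ).inv

lemma fixCliques_of_mem {θ : MulAut (W Γ o)} (h : θ ∈ stabCliques Γ o) : FixCliques θ :=
  fun Δ hΔ => ⟨1, by rw [mem_stabCliques.1 h Δ hΔ, map_one, one_smul]⟩

lemma CliqueTo.exists_conj {θ : MulAut (W Γ o)} {Δ Θ : Set V} (h : CliqueTo θ Δ Θ) :
    ∃ g, ∀ v ∈ Δ, ∃ d ∈ genSubgroup Γ o Θ, θ (gen Γ o v) = g * d * g⁻¹ := by
  obtain ⟨g, hg⟩ := h
  refine ⟨g, fun v hv => ?_⟩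
  have : θ • gen Γ o v ∈ MulAut.conj g • genSubgroup Γ o Θ := by
    rw [← hg]; exact Subgroup.smul_mem_pointwise_smul _ _ _ (gen_mem hv)
  rw [Subgroup.mem_pointwise_smul_iff_inv_smul_mem] at this
  refine ⟨_, this, ?_⟩
  simp only [← map_inv, MulAut.smul_def, MulAut.conj_apply]
  group

lemma coord_eq_zero_of_mem {S : Set V} {y : V} (hy : y ∉ S) {d : W Γ o}
    (hd : d ∈ genSubgroup Γ o S) : coord y d = 0 := by
  induction hd using Subgroup.closure_induction with
  | mem x hx => obtain ⟨w, hw, rfl⟩ := hx; exact coord_ne (fun h => hy (h ▸ hw))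
  | one => exact coord_one y
  | mul a b _ _ ha hb => rw [coord_mul, ha, hb, add_zero]
  | inv a _ ha => rw [coord_inv, ha, neg_zero]

lemma CliqueTo.mem {θ : MulAut (W Γ o)} {Δ Θ : Set V} (h : CliqueTo θ Δ Θ) {v y : V} (hv : v ∈ Δ)
    (hy : coord y (θ (gen Γ o v)) ≠ 0) : y ∈ Θ := by
  obtain ⟨g, hg⟩ := h.exists_conj
  obtain ⟨d, hd, e⟩ := hg v hv
  by_contra hyΘ
  rw [e, coord_conj, coord_eq_zero_of_mem hyΘ hd] at hy
  exact hy rfl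

lemma exists_maxClique [Fintype V] {S : Set V} (hS : Γ.IsClique S) :
    ∃ Δ, IsMaxClique Γ Δ ∧ S ⊆ Δ := by
  obtain ⟨Δ, hle, hΔ⟩ := Finite.exists_le_maximal hS
  exact ⟨Δ, ⟨hΔ.prop, fun Δ' h1 h2 => (hΔ.eq_of_le h1 h2).symm⟩, hle⟩

lemma isClique_pair {v z : V} (h : z ∈ vstar Γ v) : Γ.IsClique {v, z} := by
  rw [SimpleGraph.isClique_insert]
  refine ⟨SimpleGraph.isClique_singleton z, ?_⟩
  rintro b rfl hb
  exact h.resolve_left hb.symm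

/-- The entries of the matrix of `θ` vanish unless the stars are nested: every maximal clique through
`v` contains all vertices occurring in `θ v`. -/
lemma FixCliques.vles [Fintype V] {θ : MulAut (W Γ o)} (h : FixCliques θ) {v y : V}
    (hy : coord y (θ (gen Γ o v)) ≠ 0) : vles Γ v y := by
  intro z hz
  obtain ⟨Δ, hΔ, hs⟩ := exists_maxClique (isClique_pair hz)
  have hyΔ := (h Δ hΔ).mem (hs (Set.mem_insert _ _)) hy
  have hzΔ : z ∈ Δ := hs (Set.mem_insert_of_mem _ rfl)
  by_cases e : z = y
  · exact Or.inl e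
  · exact adj_mem_vstar (hΔ.1 hyΔ hzΔ (Ne.symm e))

/-- `θ` fixes the vertices of `S` in the abelianization. -/
def FixOn (θ : MulAut (W Γ o)) (S : Set V) : Prop :=
  ∀ x ∈ S, ∀ y, coord y (θ (gen Γ o x)) = coord y (gen Γ o x)

lemma FixOn.mul_left [Fintype V] {θ τ : MulAut (W Γ o)} {S : Set V} (h : FixOn θ S)
    (hτ : ∀ x ∈ S, τ (gen Γ o x) = gen Γ o x) : FixOn (τ * θ) S := by
  intro x hx y
  rw [MulAut.mul_apply, coord_congr τ (h x hx), hτ x hx]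

lemma FixOn.inv [Fintype V] {θ : MulAut (W Γ o)} {S : Set V} (h : FixOn θ S) : FixOn θ⁻¹ S := by
  intro x hx y
  rw [← coord_congr θ⁻¹ (h x hx), ← MulAut.mul_apply, inv_mul_cancel, MulAut.one_apply]

/-- The automorphisms in the clique-stabilizing part fixing the vertices in `S`. -/
def elim (Γ : SimpleGraph V) (o : V → ℕ) (S : Set V) : Set (MulAut (W Γ o)) :=
  {τ | τ ∈ cliqueGStar Γ o ∧ ∀ x ∈ S, τ (gen Γ o x) = gen Γ o x}

lemma elim_mul {S : Set V} {σ τ : MulAut (W Γ o)} (hσ : σ ∈ elim Γ o S) (hτ : τ ∈ elim Γ o S) :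
    σ * τ ∈ elim Γ o S :=
  ⟨mul_mem hσ.1 hτ.1, fun x hx => by rw [MulAut.mul_apply, hτ.2 x hx, hσ.2 x hx]⟩

lemma elim_one {S : Set V} : (1 : MulAut (W Γ o)) ∈ elim Γ o S := ⟨one_mem _, fun _ _ => rfl⟩

/-- `θ` preserves the maximal clique subgroups up to conjugacy and fixes the vertices of `S` in the
abelianization: the state of the column reduction when the columns in `S` are done. -/
structure Good (S : Set V) (θ : MulAut (W Γ o)) : Prop where
  fix : FixCliques θ
  on : FixOn θ S

lemma Good.mul [Fintype V] {S : Set V} {θ τ : MulAut (W Γ o)} (h : Good S θ)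
    (hτ : τ ∈ elim Γ o S) : Good S (τ * θ) :=
  ⟨(fixCliques_of_mem hτ.1.2).mul h.fix, h.on.mul_left hτ.2⟩

open Classical in
lemma Good.tv [Fintype V] {S : Set V} {θ : MulAut (W Γ o)} (h : Good S θ) {c : V → ℤ} {v x y : V}
    (hc : Lifts c (θ (gen Γ o v))) (hx : x ∉ S) (hne : x ≠ y) (hs : vles Γ x y) (m : ℤ)
    (hd : (o y : ℤ) ∣ m * o x) : ∃ τ ∈ elim Γ o S, Good S (τ * θ) ∧
      Lifts (Function.update c y (c y + m * c x)) ((τ * θ) (gen Γ o v)) := by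
  obtain ⟨τ, h0, h1, h2⟩ := exists_tv hs hne m hd
  have hτ : τ ∈ elim Γ o S := ⟨h0, fun z hz => h2 z (fun e => hx (e ▸ hz))⟩
  exact ⟨τ, hτ, h.mul hτ, hc.tv h1 h2⟩

/-- The row of `v` in the matrix of `θ⁻¹`, lifted to integers: its product with the column `c` of `v` in
the matrix of `θ` is `1`. Its nonzero entries sit at vertices `y` outside `S` with `y★ ⊆ v★`, and
satisfy a divisibility which makes transvections from `y` to `v` well defined. -/
lemma Good.exists_dual [Fintype V] {S : Set V} {θ : MulAut (W Γ o)} (h : Good S θ) {c : V → ℤ}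
    {v : V} (hv : v ∉ S) (hc : Lifts c (θ (gen Γ o v))) :
    ∃ F : V → ℤ, (o v : ℤ) ∣ ∑ y, c y * F y - 1 ∧
      ∀ y, F y ≠ 0 → y ∉ S ∧ vles Γ y v ∧ (o v : ℤ) ∣ o y * F y := by
  refine ⟨fun y => (coord v (θ⁻¹ (gen Γ o y))).cast, ?_, fun y hy => ?_⟩
  · rw [← ZMod.intCast_zmod_eq_zero_iff_dvd]
    have := expand θ⁻¹ v hc
    rw [← MulAut.mul_apply, inv_mul_cancel, MulAut.one_apply, coord_self] at this
    push_cast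
    rw [sub_eq_zero, this]
  · have h0 : coord v (θ⁻¹ (gen Γ o y)) ≠ 0 := fun e => hy (by simp only [e, ZMod.cast_zero])
    refine ⟨fun hyS => h0 ?_, h.fix.inv.vles h0, ?_⟩
    · rw [h.on.inv y hyS, coord_ne]
      rintro rfl; exact hv hyS
    · rw [← ZMod.intCast_zmod_eq_zero_iff_dvd]
      push_cast
      rw [o_mul_coord]

open Classical in
/-- A diagonal entry which is a unit modulo `o v` is made `1` by a factor automorphism. -/
lemma Good.normalize_of_coprime [Fintype V] {S : Set V} {θ : MulAut (W Γ o)} (h : Good S θ) {v : V}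
    (hv : v ∉ S) {c : V → ℤ} (hc : Lifts c (θ (gen Γ o v))) (hcop : IsCoprime (c v) (o v : ℤ)) :
    ∃ τ ∈ elim Γ o S, coord v ((τ * θ) (gen Γ o v)) = 1 := by
  obtain ⟨m, k, e⟩ := hcop
  obtain ⟨τ, h0, h1, h2⟩ := exists_fa (Γ := Γ) (o := o) (v := v) (m := m) (k := c v)
    ⟨-k, by linarith⟩
  refine ⟨τ, ⟨h0, fun z hz => h2 z (fun e => hv (e ▸ hz))⟩, ?_⟩
  rw [MulAut.mul_apply, ← hc.fa h1 h2 v, Function.update_self, eq_sub_of_add_eq e]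
  simp

open Classical in
/-- If `o v` is a power of a prime `p`, some product `c y * F y` is prime to `p`; adding row `y` to row
`v`, if necessary, makes the diagonal entry at `v` prime to `p`. -/
lemma Good.normalize_torsion [Fintype V] {S : Set V} {θ : MulAut (W Γ o)} (h : Good S θ) {v : V}
    (hv : v ∉ S) (ho : IsPrimePow (o v)) :
    ∃ τ ∈ elim Γ o S, coord v ((τ * θ) (gen Γ o v)) = 1 := by
  obtain ⟨c, hc⟩ := exists_lifts (θ (gen Γ o v))
  obtain ⟨p, k, hp, hk, e⟩ := ho
  have hp' : Prime (p : ℤ) := Nat.prime_iff_prime_int.1 hp.nat_prime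
  have hcop : ∀ a : ℤ, ¬ (p : ℤ) ∣ a → IsCoprime a (o v : ℤ) := fun a ha => by
    rw [← e]; push_cast
    exact ((Prime.coprime_iff_not_dvd hp').2 ha).symm.pow_right
  have hpv : (p : ℤ) ∣ o v := by rw [← e]; push_cast; exact dvd_pow_self _ hk.ne'
  obtain ⟨F, hF, hF'⟩ := h.exists_dual hv hc
  by_cases hcv : (p : ℤ) ∣ c v
  swap
  · exact h.normalize_of_coprime hv hc (hcop _ hcv)
  have hex : ∃ y, ¬ (p : ℤ) ∣ c y * F y := by
    by_contra! hall
    have := Finset.dvd_sum (s := Finset.univ) (fun y _ => hall y)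
    have h1 := (dvd_sub this (hpv.trans hF))
    rw [sub_sub_cancel] at h1
    exact hp'.not_isUnit (isUnit_of_dvd_one h1)
  obtain ⟨y, hy⟩ := hex
  have hcy : ¬ (p : ℤ) ∣ c y := fun h => hy (h.mul_right _)
  have hFy : ¬ (p : ℤ) ∣ F y := fun h => hy (h.mul_left _)
  obtain ⟨hyS, hs, hd⟩ := hF' y (fun e => hFy (e ▸ dvd_zero _))
  have hne : y ≠ v := by rintro rfl; exact hcy hcv
  have hd' : (o v : ℤ) ∣ 1 * o y := by
    rw [one_mul]; exact (hcop _ hFy).symm.dvd_of_dvd_mul_right hd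
  obtain ⟨τ, hτ, hg, hl⟩ := h.tv hc hyS hne hs 1 hd'
  obtain ⟨σ, hσ, e⟩ := hg.normalize_of_coprime hv hl (hcop _ (by
    rw [Function.update_self, one_mul]
    exact fun h => hcy ((dvd_add_right hcv).1 h)))
  exact ⟨σ * τ, elim_mul hσ hτ, by rw [mul_assoc]; exact e⟩

open Classical in
/-- If `o v = 0`, the Euclidean algorithm is run on the entries of column `v` in the rows `B` of
infinite order which may be added to row `v`. Primitivity of the column forces the single remaining
entry to be `1` or `-1`. -/
lemma Good.normalize_infinite [Fintype V] {S : Set V} {θ : MulAut (W Γ o)} (h : Good S θ) {v : V}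
    (hv : v ∉ S) (ho : o v = 0) : ∃ τ ∈ elim Γ o S, coord v ((τ * θ) (gen Γ o v)) = 1 := by
  set B : Finset V := Finset.univ.filter (fun y => y ∉ S ∧ vles Γ y v ∧ o y = 0) with hB
  obtain ⟨c, hc⟩ := exists_lifts (θ (gen Γ o v))
  induction hn : ∑ y ∈ B, (c y).natAbs using Nat.strong_induction_on generalizing θ c with
  | _ n ih =>
  subst hn
  have hvs : ∀ y ∈ B, c y ≠ 0 → vles Γ v y := by
    intro y hy h0
    rw [hB, Finset.mem_filter] at hy
    apply h.fix.vles
    rw [← hc y, Ne, ZMod.intCast_zmod_eq_zero_iff_dvd, hy.2.2.2, Nat.cast_zero, zero_dvd_iff]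
    exact h0
  by_cases h2 : ∃ a ∈ B, ∃ b ∈ B, a ≠ b ∧ c a ≠ 0 ∧ (c a).natAbs ≤ (c b).natAbs
  · obtain ⟨a, ha, b, hb, hab, ha0, hle⟩ := h2
    have hb0 : c b ≠ 0 := by omega
    have ha' := ha
    have hb' := hb
    rw [hB, Finset.mem_filter] at ha' hb'
    have hex : ∃ m : ℤ, (c b + m * c a).natAbs < (c b).natAbs := by
      rcases lt_or_gt_of_ne ha0 with h1 | h1 <;> rcases lt_or_gt_of_ne hb0 with h2 | h2
      · exact ⟨-1, by omega⟩
      · exact ⟨1, by omega⟩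
      · exact ⟨1, by omega⟩
      · exact ⟨-1, by omega⟩
    obtain ⟨m, hm⟩ := hex
    obtain ⟨τ, hτ, hg, hl⟩ := h.tv hc ha'.2.1 hab (ha'.2.2.1.trans (hvs b hb hb0)) m
      (by rw [ha'.2.2.2]; simp)
    obtain ⟨σ, hσ, e⟩ := ih _ (by
      apply Finset.sum_lt_sum
      · intro i _
        by_cases hi : i = b
        · subst hi; rw [Function.update_self]; exact hm.le
        · rw [Function.update_of_ne hi]
      · exact ⟨b, hb, by rw [Function.update_self]; exact hm⟩) hg _ hl rfl
    exact ⟨σ * τ, elim_mul hσ hτ, by rw [mul_assoc]; exact e⟩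
  obtain ⟨F, hF, hF'⟩ := h.exists_dual hv hc
  rw [ho, Nat.cast_zero, zero_dvd_iff, sub_eq_zero] at hF
  have hout : ∀ y, y ∉ B → F y = 0 := by
    intro y hy
    by_contra h0
    obtain ⟨h1, h2, h3⟩ := hF' y h0
    rw [ho, Nat.cast_zero, zero_dvd_iff, mul_eq_zero, or_iff_left h0] at h3
    exact hy (by rw [hB, Finset.mem_filter]; exact ⟨Finset.mem_univ _, h1, h2, by exact_mod_cast h3⟩)
  obtain ⟨y, -, hy⟩ : ∃ y ∈ Finset.univ, c y * F y ≠ 0 := Finset.exists_ne_zero_of_sum_ne_zero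
    (by rw [hF]; exact one_ne_zero)
  have hyB : y ∈ B := by
    by_contra hyB; rw [hout y hyB, mul_zero] at hy; exact hy rfl
  have hcy : c y ≠ 0 := left_ne_zero_of_mul hy
  have hz : ∀ z ∈ B, z ≠ y → c z = 0 := by
    intro z hz hzy
    by_contra h0
    push Not at h2
    have e1 := h2 z hz y hyB hzy h0
    have e2 := h2 y hyB z hz hzy.symm hcy
    omega
  rw [Finset.sum_eq_single y (fun z _ hzy => by
      by_cases hzB : z ∈ B
      · rw [hz z hzB hzy, zero_mul]
      · rw [hout z hzB, mul_zero]) (by simp)] at hF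
  have hyB' := hyB
  rw [hB, Finset.mem_filter] at hyB'
  by_cases hyv : y = v
  · subst hyv
    exact h.normalize_of_coprime hv hc ⟨F y, 0, by rw [zero_mul, add_zero, mul_comm]; exact hF⟩
  · obtain ⟨τ, hτ, hg, hl⟩ := h.tv hc hyB'.2.1 hyv hyB'.2.2.1 (F y) (by rw [hyB'.2.2.2]; simp)
    refine ⟨τ, hτ, ?_⟩
    rw [← hl v, Function.update_self, mul_comm, hF, hz v ?_ (Ne.symm hyv)]
    · simp
    · rw [hB, Finset.mem_filter]; exact ⟨Finset.mem_univ _, hv, Set.Subset.rfl, ho⟩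

/-- When the diagonal entry of column `v` is `1`, transvections from `v` remove the other entries. -/
lemma Good.clear [Fintype V] {S : Set V} {θ : MulAut (W Γ o)} (h : Good S θ) {v : V}
    (hv : v ∉ S) (h1 : coord v (θ (gen Γ o v)) = 1) :
    ∃ τ ∈ elim Γ o S, FixOn (τ * θ) (insert v S) := by
  classical
  induction hn : (Finset.univ.filter
    (fun y => coord y (θ (gen Γ o v)) ≠ coord y (gen Γ o v))).card
    using Nat.strong_induction_on generalizing θ with
  | _ n ih =>
  subst hn
  by_cases h0 : ∃ y, coord y (θ (gen Γ o v)) ≠ coord y (gen Γ o v)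
  swap
  · push Not at h0
    refine ⟨1, elim_one, ?_⟩
    rintro x (rfl | hx) y
    · rw [one_mul]; exact h0 y
    · rw [one_mul]; exact h.on x hx y
  obtain ⟨y, hy⟩ := h0
  have hvy : v ≠ y := by
    rintro rfl; exact hy (by rw [h1, coord_self])
  rw [coord_ne hvy] at hy
  obtain ⟨c, hc⟩ := exists_lifts (θ (gen Γ o v))
  have hd : (o y : ℤ) ∣ (-c y) * o v := by
    rw [neg_mul, dvd_neg, ← ZMod.intCast_zmod_eq_zero_iff_dvd]
    push_cast
    rw [hc y, mul_comm, o_mul_coord]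
  -- The entry of the lift at `v` may be taken to be exactly `1`.
  have hc' : Lifts (Function.update c v 1) (θ (gen Γ o v)) := by
    intro z
    by_cases hz : z = v
    · subst hz; rw [Function.update_self, h1]; simp
    · rw [Function.update_of_ne hz]; exact hc z
  obtain ⟨τ, hτ, hg, hl⟩ := h.tv hc' hv hvy (h.fix.vles hy) (-c y) hd
  have hy0 : coord y ((τ * θ) (gen Γ o v)) = 0 := by
    rw [← hl y]; simp [hvy.symm]
  have hz0 : ∀ z, z ≠ y → coord z ((τ * θ) (gen Γ o v)) = coord z (θ (gen Γ o v)) := by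
    intro z hz
    rw [← hl z, Function.update_of_ne hz, hc' z]
  obtain ⟨σ, hσ, e⟩ := ih _ (by
    apply Finset.card_lt_card
    refine (Finset.ssubset_iff_of_subset ?_).2 ⟨y, ?_, ?_⟩
    · intro z
      simp only [Finset.mem_filter, Finset.mem_univ, true_and]
      by_cases hz : z = y
      · subst hz; rw [hy0, coord_ne hvy]; intro h; exact absurd rfl h
      · rw [hz0 z hz]; exact id
    · simp only [Finset.mem_filter, Finset.mem_univ, true_and]
      rwa [coord_ne hvy]
    · simp only [Finset.mem_filter, Finset.mem_univ, true_and, not_not]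
      rw [hy0, coord_ne hvy]) hg (by rw [hz0 v hvy]; exact h1) rfl
  exact ⟨σ * τ, elim_mul hσ hτ, by rw [mul_assoc]; exact e⟩

/-- Gaussian elimination on the abelianization, one column at a time. -/
lemma Good.exists_elim [Fintype V] (ho : IsLabeling o) {S : Set V} {θ : MulAut (W Γ o)}
    (h : Good S θ) : ∃ τ ∈ cliqueGStar Γ o, FixOn (τ * θ) Set.univ := by
  classical
  induction hn : Sᶜ.ncard using Nat.strong_induction_on generalizing θ S with
  | _ n ih =>
  subst hn
  by_cases hS : S = Set.univ
  · subst hS; exact ⟨1, one_mem _, by rw [one_mul]; exact h.on⟩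
  obtain ⟨v, hv⟩ := (Set.ne_univ_iff_exists_notMem S).1 hS
  obtain ⟨τ, hτ, h1⟩ : ∃ τ ∈ elim Γ o S, coord v ((τ * θ) (gen Γ o v)) = 1 := by
    rcases ho v with h0 | h0
    · exact h.normalize_infinite hv h0
    · exact h.normalize_torsion hv h0
  obtain ⟨σ, hσ, h2⟩ := (h.mul hτ).clear hv h1
  obtain ⟨ρ, hρ, h3⟩ := ih (insert v S)ᶜ.ncard (by
    apply Set.ncard_lt_ncard _ (Set.toFinite _)
    rw [Set.ssubset_iff_of_subset (Set.compl_subset_compl.2 (Set.subset_insert v S))]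
    exact ⟨v, hv, fun h => h (Set.mem_insert v S)⟩) ⟨((h.mul hτ).mul hσ).fix, h2⟩ rfl
  exact ⟨ρ * (σ * τ), mul_mem hρ (mul_mem hσ.1 hτ.1), by rw [mul_assoc, mul_assoc]; exact h3⟩

/-- The subgroup of a clique embeds in the abelianization. -/
lemma eq_one_of_coord {Δ : Set V} (hΔ : Γ.IsClique Δ) {a : W Γ o} (ha : a ∈ genSubgroup Γ o Δ)
    (h : ∀ y, coord y a = 0) : a = 1 := by
  by_contra hne
  obtain ⟨t, ht⟩ := exists_ini hne
  by_cases htΔ : t ∈ Δ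
  · have : a ∈ genSubgroup Γ o (vstar Γ t) := genSubgroup_mono (fun z hz => by
      by_cases e : z = t
      · exact Or.inl e
      · exact adj_mem_vstar (hΔ htΔ hz (Ne.symm e))) ha
    rw [← mul_one a, ini_star this, h, ini_one, add_zero] at ht
    exact ht rfl
  · exact ht (ini_not_mem ha htΔ)

/-- On each maximal clique, an automorphism trivial on the abelianization which preserves the clique
subgroup up to conjugacy is a conjugation, as clique subgroups embed in the abelianization. -/
lemma FixCliques.edgeConj [Fintype V] {θ : MulAut (W Γ o)} (h : FixCliques θ)
    (h1 : FixOn θ Set.univ) : EdgeConj θ := by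
  intro u v huv
  obtain ⟨Δ, hΔ, hs⟩ := exists_maxClique (isClique_pair huv)
  obtain ⟨g, hg⟩ := (h Δ hΔ).exists_conj
  have key : ∀ x ∈ Δ, θ (gen Γ o x) = g * gen Γ o x * g⁻¹ := by
    intro x hx
    obtain ⟨d, hd, e⟩ := hg x hx
    have : d * (gen Γ o x)⁻¹ = 1 := by
      apply eq_one_of_coord hΔ.1 (mul_mem hd (inv_mem (gen_mem hx)))
      intro y
      rw [coord_mul, coord_inv, ← h1 x trivial y, e, coord_conj, add_neg_cancel]
    rw [e, mul_inv_eq_one.1 this]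
  exact ⟨g, key u (hs (Set.mem_insert _ _)), key v (hs (Set.mem_insert_of_mem _ rfl))⟩

/-- Elimination reduces `θ` to an automorphism trivial on the abelianization, which is then a product
of partial conjugations. -/
theorem FixCliques.mem_closure [Fintype V] (ho : IsLabeling o) {θ : MulAut (W Γ o)}
    (h : FixCliques θ) : θ ∈ Subgroup.closure (GStarSet Γ o) := by
  have ho1 : ∀ v, o v ≠ 1 := fun v hv => by
    rcases ho v with h | h
    · omega
    · rw [hv] at h; exact not_isPrimePow_one h
  obtain ⟨τ, hτ, h1⟩ := Good.exists_elim ho (S := ∅) ⟨h, fun x hx => absurd hx (by simp)⟩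
  have h2 := (((fixCliques_of_mem hτ.2).mul h).edgeConj h1).mem_closure ho1
  have := Subgroup.mul_mem _ (inv_mem hτ.1) h2
  rwa [inv_mul_cancel_left] at this

end Elimination

/-! ### Permuting the maximal cliques -/

section GraphPart

variable {V : Type} {Γ : SimpleGraph V} {o : V → ℕ}

open scoped Pointwise

/-- For different orders `m` and `n`, the composite of homomorphisms `ℤ/n → ℤ/m → ℤ/n`
is multiplication by a multiple of the least prime factor of `n`. For `n = 0` the least prime factor
is `2` by convention, but the product is then zero. -/
lemma minFac_dvd_mul {n m : ℕ} (hn : n = 0 ∨ IsPrimePow n) (hm : m = 0 ∨ IsPrimePow m)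
    (hne : m ≠ n) {C D : ℤ} (h1 : (m : ℤ) ∣ n * C) (h2 : (n : ℤ) ∣ m * D) :
    (n.minFac : ℤ) ∣ C * D := by
  rcases hn with rfl | hn
  · rw [Nat.cast_zero, zero_dvd_iff, mul_eq_zero, Nat.cast_eq_zero] at h2
    rw [h2.resolve_left hne, mul_zero]; exact dvd_zero _
  rcases hm with rfl | hm
  · rw [Nat.cast_zero, zero_dvd_iff, mul_eq_zero, Nat.cast_eq_zero] at h1
    rw [h1.resolve_left hn.ne_zero, zero_mul]; exact dvd_zero _
  obtain ⟨p, a, hp, ha, rfl⟩ := hn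
  obtain ⟨q, b, hq, hb, rfl⟩ := hm
  rw [hp.nat_prime.pow_minFac ha.ne']
  have key : ∀ {r : ℕ} {i j : ℕ} {E : ℤ}, Nat.Prime r → j < i →
      ((r ^ i : ℕ) : ℤ) ∣ (r ^ j : ℕ) * E → (r : ℤ) ∣ E := by
    intro r i j E hr hij h
    obtain ⟨k, rfl⟩ := Nat.exists_eq_add_of_lt hij
    push_cast at h
    rw [add_assoc, pow_add] at h
    have := Int.dvd_of_mul_dvd_mul_left (pow_ne_zero _ (by exact_mod_cast hr.ne_zero)) h
    exact (dvd_pow_self _ (Nat.succ_ne_zero k)).trans this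
  by_cases hpq : p = q
  · subst hpq
    rcases lt_trichotomy a b with h | h | h
    · exact (key hp.nat_prime h h1).mul_right _
    · subst h; exact absurd rfl hne
    · exact (key hp.nat_prime h h2).mul_left _
  · have hcop : IsCoprime (p : ℤ) ((q ^ b : ℕ) : ℤ) := by
      rw [Nat.isCoprime_iff_coprime]
      exact ((Nat.coprime_primes hp.nat_prime hq.nat_prime).2 hpq).pow_right b
    refine (hcop.dvd_of_dvd_mul_left (dvd_trans ?_ h2)).mul_left _
    push_cast
    exact dvd_pow_self _ ha.ne'

lemma dvd_o_mul_cast (θ : MulAut (W Γ o)) (v y : V) :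
    (o v : ℤ) ∣ o y * (coord v (θ (gen Γ o y))).cast := by
  rw [← ZMod.intCast_zmod_eq_zero_iff_dvd]
  push_cast
  rw [o_mul_coord]

/-- The matrices of `θ⁻¹` and `θ` are inverse to each other. -/
lemma dvd_sum_cast [Fintype V] [DecidableEq V] (θ : MulAut (W Γ o)) (z x : V) :
    (o z : ℤ) ∣ ∑ y, (coord z (θ⁻¹ (gen Γ o y))).cast * (coord y (θ (gen Γ o x))).cast -
      (if z = x then 1 else 0) := by
  have := expand θ⁻¹ z (g := θ (gen Γ o x)) (c := fun y => (coord y (θ (gen Γ o x))).cast)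
    (fun y => ZMod.intCast_zmod_cast _)
  rw [← MulAut.mul_apply, inv_mul_cancel, MulAut.one_apply] at this
  rw [← ZMod.intCast_zmod_eq_zero_iff_dvd]
  push_cast
  rw [sub_eq_zero, Finset.sum_congr rfl (fun y _ => mul_comm _ _), ← this]
  by_cases h : z = x
  · subst h; simp
  · simp [h, coord_ne (Ne.symm h)]

/-- Restricted to the vertices of order `n` and reduced modulo the least prime factor of `n` (or
modulo `2` if `n = 0`), the matrix of `θ` is invertible; a nonzero term in the expansion of its
determinant is the required permutation. -/
lemma exists_fiber_perm [Fintype V] (ho : IsLabeling o) (θ : MulAut (W Γ o)) (n : ℕ) :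
    ∃ σ : Equiv.Perm {v // o v = n}, ∀ v, coord (σ v).1 (θ (gen Γ o v.1)) ≠ 0 := by
  classical
  by_cases hn1 : n = 1
  · refine ⟨1, fun v => ?_⟩
    have := ho v.1
    rw [v.2, hn1] at this
    exact absurd this (by simp [not_isPrimePow_one])
  haveI : Fact n.minFac.Prime := ⟨Nat.minFac_prime hn1⟩
  let A : Matrix {v // o v = n} {v // o v = n} (ZMod n.minFac) :=
    fun z y => (((coord z.1 (θ⁻¹ (gen Γ o y.1))).cast : ℤ) : ZMod n.minFac)
  let B : Matrix {v // o v = n} {v // o v = n} (ZMod n.minFac) :=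
    fun y x => (((coord y.1 (θ (gen Γ o x.1))).cast : ℤ) : ZMod n.minFac)
  have hAB : A * B = 1 := by
    ext z x
    have hz : n = 0 ∨ IsPrimePow n := z.2 ▸ ho z.1
    have hdvd : (n.minFac : ℤ) ∣ o z.1 := by
      rw [z.2]; exact Int.natCast_dvd_natCast.2 (Nat.minFac_dvd n)
    have h1 := hdvd.trans (dvd_sum_cast θ z.1 x.1)
    rw [← ZMod.intCast_zmod_eq_zero_iff_dvd, Int.cast_sub, Int.cast_sum, sub_eq_zero,
      ← Fintype.sum_subtype_add_sum_subtype (fun y => o y = n)] at h1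
    -- The vertices of other orders contribute nothing modulo the least prime factor of `n`.
    have hrest : ∀ y : {y // ¬ o y = n}, (((coord z.1 (θ⁻¹ (gen Γ o y.1))).cast *
        (coord y.1 (θ (gen Γ o x.1))).cast : ℤ) : ZMod n.minFac) = 0 := by
      intro y
      rw [ZMod.intCast_zmod_eq_zero_iff_dvd, mul_comm]
      have h2 := dvd_o_mul_cast θ y.1 x.1
      have h3 := dvd_o_mul_cast θ⁻¹ z.1 y.1
      rw [x.2] at h2
      exact minFac_dvd_mul hz (ho y.1) y.2 h2 ((Int.natCast_dvd_natCast.2 z.2.symm.dvd).trans h3)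
    rw [Finset.sum_eq_zero (fun y _ => hrest y), add_zero] at h1
    rw [Matrix.mul_apply, Matrix.one_apply]
    simp only [Int.cast_mul, Int.cast_ite, Int.cast_one, Int.cast_zero] at h1
    simp only [Subtype.ext_iff]
    exact h1
  have hdet : B.det ≠ 0 := by
    intro h
    have := congrArg Matrix.det hAB
    rw [Matrix.det_mul, h, mul_zero, Matrix.det_one] at this
    exact zero_ne_one this
  rw [Matrix.det_apply] at hdet
  obtain ⟨σ, -, hσ⟩ := Finset.exists_ne_zero_of_sum_ne_zero hdet
  refine ⟨σ, fun v h0 => hσ ?_⟩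
  rw [Finset.prod_eq_zero (Finset.mem_univ v), smul_zero]
  change (((coord _ _).cast : ℤ) : ZMod n.minFac) = 0
  rw [h0]; simp

lemma exists_perm [Fintype V] (ho : IsLabeling o) (θ : MulAut (W Γ o)) :
    ∃ γ : Equiv.Perm V, (∀ v, o (γ v) = o v) ∧ ∀ v, coord (γ v) (θ (gen Γ o v)) ≠ 0 := by
  choose σ hσ using exists_fiber_perm (Γ := Γ) ho θ
  refine ⟨(Equiv.sigmaFiberEquiv o).symm.trans
    ((Equiv.sigmaCongrRight σ).trans (Equiv.sigmaFiberEquiv o)), fun v => ?_, fun v => ?_⟩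
  · exact (σ (o v) ⟨v, rfl⟩).2
  · exact hσ (o v) ⟨v, rfl⟩

/-- `θ` maps the subgroup of each maximal clique to a conjugate of the subgroup of a maximal
clique, that is, `θ ∈ Aut★ G`. -/
def AutStar (θ : MulAut (W Γ o)) : Prop :=
  ∀ Δ, IsMaxClique Γ Δ → ∃ Θ, IsMaxClique Γ Θ ∧ CliqueTo θ Δ Θ

lemma AutStar.mul {θ σ : MulAut (W Γ o)} (h1 : AutStar θ) (h2 : AutStar σ) : AutStar (θ * σ) := by
  intro Δ hΔ
  obtain ⟨Θ, hΘ, h3⟩ := h2 Δ hΔ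
  obtain ⟨Λ, hΛ, h4⟩ := h1 Θ hΘ
  exact ⟨Λ, hΛ, h4.mul h3⟩

lemma FixCliques.autStar {θ : MulAut (W Γ o)} (h : FixCliques θ) : AutStar θ :=
  fun Δ hΔ => ⟨Δ, hΔ, h Δ hΔ⟩

lemma isMaxClique_image (γ : Γ ≃g Γ) {Δ : Set V} (h : IsMaxClique Γ Δ) : IsMaxClique Γ (γ '' Δ) := by
  have himg : ∀ (γ : Γ ≃g Γ) {Δ : Set V}, Γ.IsClique Δ → Γ.IsClique (γ '' Δ) := by
    rintro γ Δ h _ ⟨a, ha, rfl⟩ _ ⟨b, hb, rfl⟩ hne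
    exact γ.map_adj_iff.2 (h ha hb (fun e => hne (e ▸ rfl)))
  refine ⟨himg γ h.1, fun Δ' h1 h2 => ?_⟩
  have e := h.2 _ (himg γ.symm h1) (fun x hx => ⟨γ x, h2 ⟨x, hx, rfl⟩, by simp⟩)
  rw [← e, Set.image_image]
  simp

lemma smul_genSubgroup_image {θ : MulAut (W Γ o)} {γ : V → V}
    (h : ∀ v, θ (gen Γ o v) = gen Γ o (γ v)) (S : Set V) :
    θ • genSubgroup Γ o S = genSubgroup Γ o (γ '' S) := by
  rw [smul_eq_map, genSubgroup, MonoidHom.map_closure, genSubgroup, Set.image_image, Set.image_image]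
  congr 1
  apply Set.image_congr
  intro v _
  exact h v

lemma graphAuto_autStar {θ : MulAut (W Γ o)} {γ : Γ ≃g Γ}
    (h : ∀ v, θ (gen Γ o v) = gen Γ o (γ v)) : AutStar θ := fun Δ hΔ =>
  ⟨γ '' Δ, isMaxClique_image γ hΔ, 1, by rw [smul_genSubgroup_image h, map_one, one_smul]⟩

/-- The automorphism induced by a labelled graph automorphism. -/
noncomputable def graphAut (γ : Γ ≃g Γ) (h : ∀ v, o (γ v) = o v) : MulAut (W Γ o) :=
  MonoidHom.toMulEquiv
    (lift (fun v => gen Γ o (γ v)) (fun v => by rw [← h v, gen_pow_o])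
      (fun u v huv => gen_comm (γ.map_adj_iff.2 huv)))
    (lift (fun v => gen Γ o (γ.symm v)) (fun v => by
        have := h (γ.symm v)
        rw [RelIso.apply_symm_apply] at this
        rw [this, gen_pow_o])
      (fun u v huv => gen_comm (γ.symm.map_adj_iff.2 huv)))
    (by apply hom_ext; intro v; simp)
    (by apply hom_ext; intro v; simp)

lemma graphAut_gen (γ : Γ ≃g Γ) (h : ∀ v, o (γ v) = o v) (v : V) :
    graphAut γ h (gen Γ o v) = gen Γ o (γ v) :=
  lift_gen (Γ := Γ) (o := o) (fun v => gen Γ o (γ v)) (fun v => by rw [← h v, gen_pow_o])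
    (fun u v huv => gen_comm (γ.map_adj_iff.2 huv)) v

/-- The permutation `γ` with `γ v` occurring in `θ v` maps each maximal clique into its partner. Hence
it preserves adjacency, being of finite order it is a graph automorphism, and composing `θ` with its
inverse gives an automorphism fixing every maximal clique subgroup up to conjugacy. -/
lemma AutStar.mem_closure [Fintype V] (ho : IsLabeling o) {θ : MulAut (W Γ o)}
    (h : AutStar θ) : θ ∈ Subgroup.closure (GStarSet Γ o) := by
  classical
  obtain ⟨γ, hγo, hγ⟩ := exists_perm ho θ
  have himg : ∀ {Δ Θ : Set V}, CliqueTo θ Δ Θ → γ '' Δ ⊆ Θ := by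
    rintro Δ Θ hΔ _ ⟨v, hv, rfl⟩
    exact hΔ.mem hv (hγ v)
  have hadj : ∀ u v, Γ.Adj u v → Γ.Adj (γ u) (γ v) := by
    intro u v huv
    obtain ⟨Δ, hΔ, hs⟩ := exists_maxClique (isClique_pair (adj_mem_vstar huv))
    obtain ⟨Θ, hΘ, hc⟩ := h Δ hΔ
    exact hΘ.1 (himg hc ⟨u, hs (Set.mem_insert _ _), rfl⟩)
      (himg hc ⟨v, hs (Set.mem_insert_of_mem _ rfl), rfl⟩) (γ.injective.ne huv.ne)
  have hadj' : ∀ u v, Γ.Adj (γ u) (γ v) → Γ.Adj u v := by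
    intro u v huv
    obtain ⟨n, hn, e⟩ := isOfFinOrder_iff_pow_eq_one.1 (isOfFinOrder_of_finite γ)
    have hpow : ∀ k : ℕ, Γ.Adj ((γ ^ k) (γ u)) ((γ ^ k) (γ v)) := by
      intro k
      induction k with
      | zero => exact huv
      | succ k ih => rw [pow_succ', Equiv.Perm.mul_apply, Equiv.Perm.mul_apply]; exact hadj _ _ ih
    have := hpow (n - 1)
    rwa [← Equiv.Perm.mul_apply, ← Equiv.Perm.mul_apply, ← pow_succ, Nat.sub_add_cancel hn, e] at this
  let γ' : Γ ≃g Γ := ⟨γ, fun {a b} => ⟨hadj' a b, hadj a b⟩⟩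
  have hα : graphAut γ' hγo ∈ Subgroup.closure (GStarSet Γ o) :=
    Subgroup.subset_closure (Or.inl ⟨γ', hγo, graphAut_gen γ' hγo⟩)
  have hfix : FixCliques ((graphAut γ' hγo)⁻¹ * θ) := by
    intro Δ hΔ
    obtain ⟨Θ, hΘ, hc⟩ := h Δ hΔ
    have e : Θ = Set.image γ' Δ := (isMaxClique_image γ' hΔ).2 _ hΘ.1 (himg hc)
    refine CliqueTo.mul (CliqueTo.inv ⟨1, ?_⟩) hc
    rw [smul_genSubgroup_image (graphAut_gen γ' hγo), map_one, one_smul, e]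
  have := Subgroup.mul_mem _ hα (hfix.mem_closure ho)
  rwa [mul_inv_cancel_left] at this

lemma fixCliques_of_conj {θ : MulAut (W Γ o)}
    (h : ∀ Δ, IsMaxClique Γ Δ → ∃ g, ∀ v ∈ Δ, ∃ d ∈ genSubgroup Γ o Δ, ∃ d' ∈ genSubgroup Γ o Δ,
      θ (gen Γ o v) = g * d * g⁻¹ ∧ θ d' = g * gen Γ o v * g⁻¹) : FixCliques θ := by
  intro Δ hΔ
  obtain ⟨g, hg⟩ := h Δ hΔ
  choose! d hd d' hd' h1 h2 using hg
  refine ⟨g, le_antisymm ?_ ?_⟩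
  · rw [smul_eq_map, Subgroup.map_le_iff_le_comap, genSubgroup, Subgroup.closure_le]
    rintro _ ⟨v, hv, rfl⟩
    exact ⟨d v, hd v hv, (h1 v hv).symm⟩
  · rw [smul_eq_map, Subgroup.map_le_iff_le_comap]
    nth_rewrite 1 [genSubgroup]
    rw [Subgroup.closure_le]
    rintro _ ⟨v, hv, rfl⟩
    exact ⟨d' v, hd' v hv, h2 v hv⟩

lemma IsFactorAuto.fixCliques {θ : MulAut (W Γ o)} (h : IsFactorAuto Γ o θ) : FixCliques θ := by
  obtain ⟨v, m, hm, h1, h2⟩ := h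
  obtain ⟨k, hk⟩ : ∃ k : ℤ, (o v : ℤ) ∣ m * k - 1 := by
    rcases hm with ⟨-, rfl⟩ | ⟨-, -, h⟩
    · exact ⟨-1, by simp⟩
    · obtain ⟨a, b, e⟩ := Int.isCoprime_iff_gcd_eq_one.2 h
      exact ⟨a, -b, by linarith⟩
  obtain ⟨τ, h0, h3, h4⟩ := exists_fa (Γ := Γ) hk
  have : θ = τ := by
    apply aut_ext
    intro z
    by_cases hz : z = v
    · rw [hz, h1, h3]
    · rw [h2 z hz, h4 z hz]
  rw [this]
  exact fixCliques_of_mem h0.2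

/-- A ★-transvection `x ↦ x y ^ q` preserves all maximal clique subgroups. If a maximal clique through
`x` does not contain `y`, then it contains some `z` not commuting with `y`; as `z` commutes with `x`,
well-definedness makes `y ^ q` commute with `z`, and so `y ^ q = 1`. -/
lemma IsStarTransvection.fixCliques (ho : ∀ v, o v ≠ 1) {θ : MulAut (W Γ o)} (h : IsStarTransvection Γ o θ) :
    FixCliques θ := by
  obtain ⟨x, y, hxy, hne, q, -, ⟨e, he1, he2⟩, -, h1, h2⟩ := h
  apply fixCliques_of_conj
  intro Δ hΔ
  by_cases hyΔ : y ∈ Δ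
  · refine ⟨1, fun v hv => ?_⟩
    by_cases hvx : v = x
    · subst hvx
      refine ⟨_, mul_mem (gen_mem hv) (Subgroup.pow_mem _ (gen_mem hyΔ) q), _,
        mul_mem (gen_mem hv) (inv_mem (Subgroup.pow_mem _ (gen_mem hyΔ) q)), by rw [h1]; group, ?_⟩
      rw [map_mul, h1, map_inv, map_pow, h2 y hne.symm]; group
    · exact ⟨_, gen_mem hv, _, gen_mem hv, by rw [h2 v hvx]; group, by rw [h2 v hvx]; group⟩
  · have hfix : ∀ v ∈ Δ, θ (gen Γ o v) = gen Γ o v := by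
      intro v hv
      by_cases hvx : v = x
      swap
      · exact h2 v hvx
      subst hvx
      have hnc : ¬ Γ.IsClique (insert y Δ) := fun hc =>
        hyΔ ((hΔ.2 _ hc (Set.subset_insert y Δ)) ▸ Set.mem_insert y Δ)
      rw [SimpleGraph.isClique_insert] at hnc
      push Not at hnc
      obtain ⟨z, hz, hyz, hna⟩ := hnc hΔ.1
      have hvz : v ≠ z := by rintro rfl; exact hna hxy.symm
      have hc := (gen_comm (o := o) (hΔ.1 hv hz hvz)).map e
      rw [he1, he2 z hvz.symm] at hc
      have hc' : Commute (gen Γ o y ^ q) (gen Γ o z) := by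
        have := hc.mul_left ((gen_comm (o := o) (hΔ.1 hv hz hvz)).inv_left)
        have e3 : gen Γ o v * gen Γ o y ^ q * (gen Γ o v)⁻¹ = gen Γ o y ^ q := by
          rw [((gen_comm (o := o) hxy).pow_right q).eq]; group
        rwa [e3] at this
      have hq := coord_eq_zero_of_mem (y := y) (fun hy => hy.elim hyz fun hy => hna hy.symm)
        (mem_star_of_commute ho hc'.eq)
      rw [← zpow_natCast, coord_zpow, coord_self] at hq
      rw [h1, ← zpow_natCast, gen_zpow_eq_one (by simpa using hq), mul_one]
    exact ⟨1, fun v hv => ⟨_, gen_mem hv, _, gen_mem hv, by rw [hfix v hv]; group,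
      by rw [hfix v hv]; group⟩⟩

lemma IsPartialConj.fixCliques {θ : MulAut (W Γ o)} (h : IsPartialConj Γ o θ) : FixCliques θ := by
  obtain ⟨u, K, hK, h1, h2⟩ := h
  have hs := hK.sep
  apply fixCliques_of_conj
  intro Δ hΔ
  by_cases hd : ∃ a ∈ Δ, a ∈ K
  · obtain ⟨a, ha, haK⟩ := hd
    have key : ∀ v ∈ Δ, θ (gen Γ o v) = gen Γ o u * gen Γ o v * (gen Γ o u)⁻¹ := by
      intro v hv
      by_cases hvK : v ∈ K
      · exact h1 v hvK
      · rw [h2 v hvK]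
        have hav : Γ.Adj a v := hΔ.1 ha hv (fun e => hvK (e ▸ haK))
        rw [(commute_star (hs.2 a haK v hav hvK)).eq, mul_inv_cancel_right]
    exact ⟨gen Γ o u, fun v hv => ⟨_, gen_mem hv, _, gen_mem hv, key v hv, key v hv⟩⟩
  · push Not at hd
    have hfix : ∀ v ∈ Δ, θ (gen Γ o v) = gen Γ o v := fun v hv => h2 v (hd v hv)
    exact ⟨1, fun v hv => ⟨_, gen_mem hv, _, gen_mem hv, by rw [hfix v hv]; group,
      by rw [hfix v hv]; group⟩⟩

/-- The elementary automorphisms in `𝒢★` and their inverses lie in `Aut★ G`. -/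
lemma autStar_of_mem_closure (ho : ∀ v, o v ≠ 1) {θ : MulAut (W Γ o)} (h : θ ∈ Subgroup.closure (GStarSet Γ o)) :
    AutStar θ := by
  have hfix : ∀ {θ : MulAut (W Γ o)}, FixCliques θ → AutStar θ ∧ AutStar θ⁻¹ :=
    fun h => ⟨h.autStar, h.inv.autStar⟩
  suffices AutStar θ ∧ AutStar θ⁻¹ from this.1
  induction h using Subgroup.closure_induction with
  | mem θ hθ =>
    rcases hθ with ⟨γ, -, h⟩ | h | h | h
    · refine ⟨graphAuto_autStar h, graphAuto_autStar (γ := γ.symm) fun v => ?_⟩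
      have := h (γ.symm v)
      rw [RelIso.apply_symm_apply] at this
      rw [← this, ← MulAut.mul_apply, inv_mul_cancel, MulAut.one_apply]
    · exact hfix h.fixCliques
    · exact hfix (h.fixCliques ho)
    · exact hfix h.fixCliques
  | one => exact hfix (fixCliques_of_mem (one_mem _))
  | mul a b _ _ ha hb => exact ⟨ha.1.mul hb.1, by rw [mul_inv_rev]; exact hb.2.mul ha.2⟩
  | inv a _ ha => exact ⟨ha.2, by rw [inv_inv]; exact ha.1⟩

end GraphPart
end GP

open GP in
/-- `Aut★ G`, the automorphisms sending the subgroup of each maximal clique to a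
conjugate of the subgroup of a maximal clique, is generated by `𝒢★`. -/
theorem autStar_generated (V : Type) [Fintype V] [DecidableEq V]
    (Γ : SimpleGraph V) (o : V → ℕ) (ho : IsLabeling o) :
    (Subgroup.closure (GStarSet Γ o) : Set (MulAut (W Γ o))) =
      {θ : MulAut (W Γ o) | ∀ Δ : Set V, IsMaxClique Γ Δ →
        ∃ (Θ : Set V) (g : W Γ o), IsMaxClique Γ Θ ∧
          Subgroup.map (MulEquiv.toMonoidHom θ) (genSubgroup Γ o Δ) =
            Subgroup.map (MulEquiv.toMonoidHom (MulAut.conj g)) (genSubgroup Γ o Θ)} := by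
  refine Set.Subset.antisymm (fun θ hθ Δ hΔ => ?_) (fun θ hθ => ?_)
  · have ho1 : ∀ v, o v ≠ 1 := fun v h => by
      have := ho v
      rw [h] at this
      exact absurd this (by simp [not_isPrimePow_one])
    obtain ⟨Θ, hΘ, g, e⟩ := autStar_of_mem_closure ho1 hθ Δ hΔ
    exact ⟨Θ, g, hΘ, e⟩
  · exact AutStar.mem_closure ho fun Δ hΔ =>
      let ⟨Θ, g, hΘ, e⟩ := hθ Δ hΔ
      ⟨Θ, hΘ, g, e⟩
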